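/- arXiv:2604.22701 — 6 statements merged into one kernel-verified Lean document; each statement's English description precedes it below -/
import Mathlib

section
/- Let (Ω, 𝔐, μ) be a measure space, E and F complex Banach spaces, 1 ≤ p ≤ q < ∞ with q' the conjugate exponent of q, and let 𝒜 : Ω → B(E, F*) be weakly* measurable such that for every weakly p-summable sequence (x_n)_{n=1}^∞ in E and every q'-summable sequence (y_n)_{n=1}^∞ in F the function t ↦ ∑_{n=1}^∞ |⟨𝒜_t x_n, y_n⟩| belongs to L¹(Ω, 𝔐, μ). Then 𝒜 is weakly* integrable and, for every S ∈ 𝔐, the Gel'fand integral ∫_S 𝒜 dμ is a (q,p)-summing operator from E to F*; moreover the constant K(S) := sup { ∫_S ∑_{n=1}^∞ |⟨𝒜_t x_n, y_n⟩| dμ(t) : ‖(x_n)‖_{p,w} ≤ 1, ‖(y_n)‖_{q'} ≤ 1 } is an admissible (q,p)-summing constant for ∫_S 𝒜 dμ, i.e. π_{q,p}(∫_S 𝒜 dμ) ≤ K(S). -/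
open MeasureTheory ENNReal

/-- `C` is an admissible `(q,p)`-summing constant for `T`. -/
def IsSummingConstQP (q p : ℝ) {E F : Type*} [NormedAddCommGroup E] [NormedSpace ℂ E]
    [NormedAddCommGroup F] [NormedSpace ℂ F] (T : E →L[ℂ] F) (C : ℝ) : Prop :=
  ∀ (n : ℕ) (x : Fin n → E),
    (∑ k, ‖T (x k)‖ ^ q) ^ (1 / q) ≤
      C * ⨆ φ : {φ : StrongDual ℂ E // ‖φ‖ ≤ 1},
        (∑ k, ‖(φ : StrongDual ℂ E) (x k)‖ ^ p) ^ (1 / p)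

/-!
The constant `K` is finite by a gliding hump argument. If the integrals `∫ ∑ₙ |⟨𝒜ₜ xₙ, yₙ⟩| dμ`
were unbounded over normalized pairs, there would be pairs `(x⁽ʲ⁾, y⁽ʲ⁾)` whose integral exceeds
`4ʲ`. The double families `2⁻ʲ x⁽ʲ⁾ₙ` and `2⁻ʲ y⁽ʲ⁾ₙ` are still weakly `p`-summable and
`q'`-summable, but each `j` contributes at least `4⁻ʲ · 4ʲ = 1` to their integral, contradicting
the `L¹` hypothesis. Testing `K` on one-term families bounds the bilinear form `∫ ⟨𝒜ₜ x, y⟩ dμ`,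
which gives the Gel'fand integral `I`; testing it on finite families gives `∑ₖ |⟨I xₖ, yₖ⟩| ≤ K`
for normalized `x` and `y`, and `ℓ^q`-`ℓ^q'` duality turns this into the summing inequality.
-/

open Function

section ExtendByZero

variable {ι κ V W M : Type*} [Zero V] [Zero W] [Zero M]

theorem comp_extend_zero (e : ι → κ) (x : ι → V) {g : V → M} (hg : g 0 = 0) :
    (fun m => g (extend e x 0 m)) = extend e (fun k => g (x k)) 0 :=
  funext fun m => (apply_extend g e 0 m).trans <| by
    rw [show g ∘ (0 : κ → V) = 0 from funext fun _ => hg, comp_def]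

theorem comp_extend_zero₂ {e : ι → κ} (he : Injective e) (x : ι → V) (y : ι → W) {g : V → W → M}
    (hg : g 0 0 = 0) :
    (fun m => g (extend e x 0 m) (extend e y 0 m)) = extend e (fun k => g (x k) (y k)) 0 := by
  funext m
  by_cases hm : ∃ k, e k = m
  · obtain ⟨k, rfl⟩ := hm
    simp only [he.extend_apply]
  · simp only [extend_apply' _ _ _ hm, Pi.zero_apply, hg]

end ExtendByZero

section Summability

variable {𝕜 : Type*} [RCLike 𝕜] {E F : Type*} [NormedAddCommGroup E] [NormedSpace 𝕜 E]
  [NormedAddCommGroup F] {ι κ : Type*} {p q : ℝ}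

variable (𝕜 p) in
/-- Weak `p`-summability of a family, over an arbitrary index type so that finite families, double
families and sequences are treated alike. -/
def WeaklySummable (x : ι → E) : Prop :=
  ∀ φ : StrongDual 𝕜 E, Summable fun n => ‖φ (x n)‖ ^ p

variable (𝕜 p) in
/-- The condition `‖x‖_{p,w} ≤ 1`. Since `∑'` is `0` on divergent series, it has this meaning only
for weakly `p`-summable families. -/
def WeakNormLeOne (x : ι → E) : Prop :=
  ∀ φ : StrongDual 𝕜 E, ‖φ‖ ≤ 1 → ∑' n, ‖φ (x n)‖ ^ p ≤ 1

variable (q) in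
/-- `q'`-summability of a family for the conjugate exponent `q' = q / (q - 1)`, meaning
boundedness when `q = 1`. -/
def ConjSummable (y : ι → F) : Prop :=
  if 1 < q then Summable fun n => ‖y n‖ ^ (q / (q - 1)) else BddAbove (Set.range fun n => ‖y n‖)

variable (q) in
/-- The condition that `y` is `q'`-summable with `‖y‖_{q'} ≤ 1`, where `q' = q / (q - 1)`, meaning
`∞` when `q = 1`. -/
def ConjNormLeOne (y : ι → F) : Prop :=
  if 1 < q then
    Summable (fun n => ‖y n‖ ^ (q / (q - 1))) ∧ ∑' n, ‖y n‖ ^ (q / (q - 1)) ≤ 1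
  else ∀ n, ‖y n‖ ≤ 1

theorem conjExponent_pos (hq : 1 < q) : 0 < q / (q - 1) :=
  div_pos (zero_lt_one.trans hq) (sub_pos.2 hq)

theorem WeaklySummable.of_finite [Finite ι] (x : ι → E) : WeaklySummable 𝕜 p x :=
  fun _ => .of_finite

theorem ConjSummable.of_finite [Finite ι] (y : ι → F) : ConjSummable q y := by
  unfold ConjSummable
  split_ifs
  · exact .of_finite
  · exact (Set.finite_range _).bddAbove

theorem weakNormLeOne_const [Unique ι] (hp : 0 ≤ p) {x : E} (hx : ‖x‖ ≤ 1) :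
    WeakNormLeOne 𝕜 p fun _ : ι => x := fun φ hφ => by
  rw [tsum_fintype, Fintype.sum_unique]
  exact Real.rpow_le_one (norm_nonneg _) (φ.le_of_opNorm_le_of_le hφ hx |>.trans_eq (one_mul 1)) hp

theorem conjNormLeOne_const [Unique ι] {y : F} (hy : ‖y‖ ≤ 1) :
    ConjNormLeOne q fun _ : ι => y := by
  unfold ConjNormLeOne
  split_ifs with h1
  · refine ⟨.of_finite, ?_⟩
    rw [tsum_fintype, Fintype.sum_unique]
    exact Real.rpow_le_one (norm_nonneg _) hy (conjExponent_pos h1).le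
  · exact fun _ => hy

theorem ConjNormLeOne.mono {G : Type*} [NormedAddCommGroup G] {y : ι → F} {b : ι → G}
    (hb : ConjNormLeOne q b) (hyb : ∀ n, ‖y n‖ ≤ ‖b n‖) : ConjNormLeOne q y := by
  unfold ConjNormLeOne at hb ⊢
  split_ifs at hb ⊢ with h1
  · have hle n : ‖y n‖ ^ (q / (q - 1)) ≤ ‖b n‖ ^ (q / (q - 1)) :=
      Real.rpow_le_rpow (norm_nonneg _) (hyb n) (conjExponent_pos h1).le
    have hy : Summable fun n => ‖y n‖ ^ (q / (q - 1)) :=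
      hb.1.of_nonneg_of_le (fun n => by positivity) hle
    exact ⟨hy, (hy.tsum_le_tsum hle hb.1).trans hb.2⟩
  · exact fun n => (hyb n).trans (hb n)

section Extend

variable {e : ι → κ} (he : Injective e)
include he

theorem WeaklySummable.extend_zero (hp : p ≠ 0) {x : ι → E} (hx : WeaklySummable 𝕜 p x) :
    WeaklySummable 𝕜 p (extend e x 0) := fun φ => by
  rw [comp_extend_zero e x (g := fun v => ‖φ v‖ ^ p) (by simp [Real.zero_rpow hp]),
    summable_extend_zero he]
  exact hx φ

theorem WeakNormLeOne.extend_zero (hp : p ≠ 0) {x : ι → E} (hx : WeakNormLeOne 𝕜 p x) :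
    WeakNormLeOne 𝕜 p (extend e x 0) := fun φ hφ => by
  rw [comp_extend_zero e x (g := fun v => ‖φ v‖ ^ p) (by simp [Real.zero_rpow hp]),
    tsum_extend_zero he]
  exact hx φ hφ

theorem ConjSummable.extend_zero {y : ι → F} (hy : ConjSummable q y) :
    ConjSummable q (extend e y 0) := by
  unfold ConjSummable at hy ⊢
  split_ifs at hy ⊢ with h1
  · rwa [comp_extend_zero e y (g := fun v => ‖v‖ ^ (q / (q - 1)))
      (by simp [Real.zero_rpow (conjExponent_pos h1).ne']), summable_extend_zero he]
  · rw [comp_extend_zero e y norm_zero]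
    exact (hy.union (bddAbove_singleton (a := 0))).mono <| by
      rintro _ ⟨m, rfl⟩
      by_cases hm : ∃ k, e k = m
      · obtain ⟨k, rfl⟩ := hm
        exact .inl ⟨k, (he.extend_apply (fun k => ‖y k‖) 0 k).symm⟩
      · exact .inr (extend_apply' _ _ _ hm)

theorem ConjNormLeOne.extend_zero {y : ι → F} (hy : ConjNormLeOne q y) :
    ConjNormLeOne q (extend e y 0) := by
  unfold ConjNormLeOne at hy ⊢
  split_ifs at hy ⊢ with h1
  · rwa [comp_extend_zero e y (g := fun v => ‖v‖ ^ (q / (q - 1)))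
      (by simp [Real.zero_rpow (conjExponent_pos h1).ne']), summable_extend_zero he,
      tsum_extend_zero he]
  · intro m
    by_cases hm : ∃ k, e k = m
    · obtain ⟨k, rfl⟩ := hm
      simpa only [he.extend_apply] using hy k
    · simp [extend_apply' _ _ _ hm]

end Extend

section DoubleFamilies

theorem norm_ofReal_inv_smul_rpow [NormedSpace 𝕜 F] {w r : ℝ} (hw : 0 < w) (v : F) :
    ‖(w : 𝕜)⁻¹ • v‖ ^ r = (w ^ r)⁻¹ * ‖v‖ ^ r := by
  rw [norm_smul, Real.mul_rpow (norm_nonneg _) (norm_nonneg _), norm_inv,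
    RCLike.norm_of_nonneg hw.le, Real.inv_rpow hw.le]

theorem WeakNormLeOne.tsum_le (hp : 0 < p) {x : ι → E} (hx : WeakNormLeOne 𝕜 p x)
    (φ : StrongDual 𝕜 E) : ∑' n, ‖φ (x n)‖ ^ p ≤ ‖φ‖ ^ p := by
  obtain rfl | hφ := eq_or_ne φ 0
  · simp [Real.zero_rpow hp.ne']
  have hφ' : 0 < ‖φ‖ := norm_pos_iff.2 hφ
  have h := hx ((‖φ‖ : 𝕜)⁻¹ • φ) (norm_smul_inv_norm hφ).le
  simp only [smul_apply, norm_ofReal_inv_smul_rpow hφ', tsum_mul_left] at h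
  rwa [inv_mul_le_iff₀ (Real.rpow_pos_of_pos hφ' p), mul_one] at h

theorem summable_norm_smul_rpow [NormedSpace 𝕜 F] {c : ι → 𝕜} {v : ι → κ → F} {r B : ℝ}
    (hc : Summable fun j => ‖c j‖ ^ r) (hv : ∀ j, Summable fun n => ‖v j n‖ ^ r)
    (hB : ∀ j, ∑' n, ‖v j n‖ ^ r ≤ B) :
    Summable fun z : ι × κ => ‖c z.1 • v z.1 z.2‖ ^ r := by
  simp only [norm_smul, Real.mul_rpow (norm_nonneg _) (norm_nonneg _)]
  rw [summable_prod_of_nonneg fun z => by positivity]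
  refine ⟨fun j => (hv j).mul_left (‖c j‖ ^ r), ?_⟩
  simp only [tsum_mul_left]
  have hnonneg j : 0 ≤ ‖c j‖ ^ r := by positivity
  exact .of_nonneg_of_le (fun j => mul_nonneg (hnonneg j) (tsum_nonneg fun n => by positivity))
    (fun j => mul_le_mul_of_nonneg_left (hB j) (hnonneg j)) (hc.mul_right B)

theorem WeaklySummable.prod_smul (hp : 0 < p) {c : ι → 𝕜} {x : ι → κ → E}
    (hc : Summable fun j => ‖c j‖ ^ p) (hx : ∀ j, WeaklySummable 𝕜 p (x j))
    (hx1 : ∀ j, WeakNormLeOne 𝕜 p (x j)) :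
    WeaklySummable 𝕜 p fun z : ι × κ => c z.1 • x z.1 z.2 := fun φ => by
  simpa only [map_smul] using
    summable_norm_smul_rpow hc (fun j => hx j φ) fun j => (hx1 j).tsum_le hp φ

theorem ConjSummable.prod_smul [NormedSpace 𝕜 F] {c : ι → 𝕜} {y : ι → κ → F}
    (hc : ConjSummable q c) (hy : ∀ j, ConjNormLeOne q (y j)) :
    ConjSummable q fun z : ι × κ => c z.1 • y z.1 z.2 := by
  unfold ConjSummable at hc ⊢
  unfold ConjNormLeOne at hy
  split_ifs at hc hy ⊢ with h1
  · exact summable_norm_smul_rpow hc (fun j => (hy j).1) fun j => (hy j).2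
  · obtain ⟨B, hB⟩ := hc
    refine ⟨B, ?_⟩
    rintro _ ⟨z, rfl⟩
    calc ‖c z.1 • y z.1 z.2‖ ≤ ‖c z.1‖ := by
          rw [norm_smul]
          exact mul_le_of_le_one_right (norm_nonneg _) (hy z.1 z.2)
      _ ≤ B := hB ⟨z.1, rfl⟩

variable (𝕜)

theorem summable_norm_two_inv_pow_rpow {r : ℝ} (hr : 0 < r) :
    Summable fun j : ℕ => ‖(2⁻¹ : 𝕜) ^ j‖ ^ r := by
  have hgeom : Summable fun j : ℕ => ((2⁻¹ : ℝ) ^ r) ^ j :=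
    summable_geometric_of_lt_one (by positivity)
      (Real.rpow_lt_one (by norm_num) (by norm_num) hr)
  simpa [Real.rpow_pow_comm] using hgeom

theorem conjSummable_two_inv_pow : ConjSummable q fun j : ℕ => (2⁻¹ : 𝕜) ^ j := by
  unfold ConjSummable
  split_ifs with h1
  · exact summable_norm_two_inv_pow_rpow 𝕜 (conjExponent_pos h1)
  · refine ⟨1, ?_⟩
    rintro _ ⟨j, rfl⟩
    simpa using pow_le_one₀ (by norm_num : (0 : ℝ) ≤ 2⁻¹) (by norm_num) (n := j)

end DoubleFamilies

end Summability

section SummingConstants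

variable {𝕜 : Type*} [RCLike 𝕜] {E F : Type*} [NormedAddCommGroup E] [NormedSpace 𝕜 E]
  [NormedAddCommGroup F] [NormedSpace 𝕜 F] {ι : Type*} [Fintype ι] {p q : ℝ}

variable (𝕜 p) in
/-- The norm `‖x‖_{p,w}` of a finite family. -/
noncomputable def weakSumNorm (x : ι → E) : ℝ :=
  ⨆ φ : {φ : StrongDual 𝕜 E // ‖φ‖ ≤ 1}, (∑ k, ‖(φ : StrongDual 𝕜 E) (x k)‖ ^ p) ^ (1 / p)

/-- The notion of `IsSummingConstQP` over an arbitrary `RCLike` field of scalars. -/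
def IsSummingConst (q p : ℝ) (T : E →L[𝕜] F) (C : ℝ) : Prop :=
  ∀ (n : ℕ) (x : Fin n → E), (∑ k, ‖T (x k)‖ ^ q) ^ (1 / q) ≤ C * weakSumNorm 𝕜 p x

theorem weakSumNorm_nonneg (x : ι → E) : 0 ≤ weakSumNorm 𝕜 p x :=
  Real.iSup_nonneg fun _ => by positivity

theorem rpow_sum_le_weakSumNorm (hp : 0 < p) (x : ι → E) {φ : StrongDual 𝕜 E} (hφ : ‖φ‖ ≤ 1) :
    (∑ k, ‖φ (x k)‖ ^ p) ^ (1 / p) ≤ weakSumNorm 𝕜 p x := by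
  refine le_ciSup (f := fun ψ : {ψ : StrongDual 𝕜 E // ‖ψ‖ ≤ 1} =>
    (∑ k, ‖(ψ : StrongDual 𝕜 E) (x k)‖ ^ p) ^ (1 / p)) ⟨(∑ k, ‖x k‖ ^ p) ^ (1 / p), ?_⟩ ⟨φ, hφ⟩
  rintro _ ⟨⟨ψ, hψ⟩, rfl⟩
  have hle k : ‖ψ (x k)‖ ≤ ‖x k‖ := (ψ.le_of_opNorm_le hψ _).trans_eq (one_mul _)
  dsimp only
  gcongr with k
  exact hle k

theorem weakNormLeOne_inv_smul (hp : 0 < p) {x : ι → E} {w : ℝ} (hw : weakSumNorm 𝕜 p x < w) :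
    WeakNormLeOne 𝕜 p fun k => (w : 𝕜)⁻¹ • x k := fun φ hφ => by
  have hw0 : 0 < w := (weakSumNorm_nonneg x).trans_lt hw
  have hsum : ∑ k, ‖φ (x k)‖ ^ p ≤ w ^ p := by
    rw [← Real.rpow_inv_le_iff_of_pos (by positivity) hw0.le hp, ← one_div]
    exact (rpow_sum_le_weakSumNorm hp x hφ).trans hw.le
  simp only [map_smul, norm_ofReal_inv_smul_rpow hw0, tsum_fintype, ← Finset.mul_sum]
  rwa [inv_mul_le_iff₀ (Real.rpow_pos_of_pos hw0 p), mul_one]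

theorem rpow_sum_rpow_le_of_forall_conjNormLeOne (hq : 1 ≤ q) {a : ι → NNReal} {M : ℝ}
    (h : ∀ b : ι → NNReal, ConjNormLeOne q (fun k => (b k : ℝ)) → ∑ k, (a k : ℝ) * b k ≤ M) :
    (∑ k, (a k : ℝ) ^ q) ^ (1 / q) ≤ M := by
  obtain rfl | h1 := hq.eq_or_lt
  · simpa using h 1 (by simp [ConjNormLeOne])
  · obtain ⟨b, hb, hab⟩ :=
      (NNReal.isGreatest_Lp Finset.univ a (Real.HolderConjugate.conjExponent h1)).1
    have hb' : ConjNormLeOne q fun k => (b k : ℝ) := by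
      rw [ConjNormLeOne, if_pos h1]
      refine ⟨.of_finite, ?_⟩
      simp only [tsum_fintype, NNReal.norm_eq]
      exact_mod_cast hb
    calc (∑ k, (a k : ℝ) ^ q) ^ (1 / q) = ∑ k, (a k : ℝ) * b k := by exact_mod_cast hab.symm
      _ ≤ M := h b hb'

theorem exists_norm_le_one_mul_norm_le_norm_apply (T : StrongDual 𝕜 F) {r : ℝ} (hr : r < 1) :
    ∃ u : F, ‖u‖ ≤ 1 ∧ r * ‖T‖ ≤ ‖T u‖ := by
  obtain rfl | hT := eq_or_ne T 0
  · exact ⟨0, by simp, by simp⟩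
  · obtain ⟨u, hu, hTu⟩ :=
      T.exists_lt_apply_of_lt_opNorm (mul_lt_of_lt_one_left (norm_pos_iff.2 hT) hr)
    exact ⟨u, hu.le, hTu.le⟩

theorem rpow_sum_norm_rpow_le_of_forall_conjNormLeOne (hq : 1 ≤ q) {T : ι → StrongDual 𝕜 F}
    {M : ℝ} (h : ∀ y : ι → F, ConjNormLeOne q y → ∑ k, ‖T k (y k)‖ ≤ M) :
    (∑ k, ‖T k‖ ^ q) ^ (1 / q) ≤ M := by
  refine rpow_sum_rpow_le_of_forall_conjNormLeOne (a := fun k => ‖T k‖₊) hq fun b hb => ?_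
  have hscaled (r : ℝ) (hr : r < 1) : r * ∑ k, ‖T k‖ * b k ≤ M := by
    choose u hu hTu using fun k => exists_norm_le_one_mul_norm_le_norm_apply (T k) hr
    have hy : ConjNormLeOne q fun k => ((b k : ℝ) : 𝕜) • u k := hb.mono fun k => by
      simpa [norm_smul] using mul_le_of_le_one_right (b k).2 (hu k)
    calc r * ∑ k, ‖T k‖ * b k = ∑ k, b k * (r * ‖T k‖) := by
          rw [Finset.mul_sum]
          exact Finset.sum_congr rfl fun k _ => by ring
      _ ≤ ∑ k, b k * ‖T k (u k)‖ := by gcongr with k; exact hTu k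
      _ = ∑ k, ‖T k (((b k : ℝ) : 𝕜) • u k)‖ := by simp
      _ ≤ M := h _ hy
  have hlim : Filter.Tendsto (fun r : ℝ => r * ∑ k, ‖T k‖ * b k) (nhdsWithin 1 (Set.Iio 1))
      (nhds (1 * ∑ k, ‖T k‖ * b k)) :=
    ((continuous_mul_const _).tendsto 1).mono_left nhdsWithin_le_nhds
  rw [one_mul] at hlim
  exact le_of_tendsto hlim (Filter.eventually_of_mem self_mem_nhdsWithin hscaled)

theorem isSummingConst_of_sum_norm_apply_le (hp : 0 < p) (hq : 1 ≤ q)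
    {T : E →L[𝕜] StrongDual 𝕜 F} {C : ℝ}
    (hT : ∀ (n : ℕ) (x : Fin n → E) (y : Fin n → F), WeakNormLeOne 𝕜 p x → ConjNormLeOne q y →
      ∑ k, ‖T (x k) (y k)‖ ≤ C) :
    IsSummingConst q p T C := fun n x => by
  refine rpow_sum_norm_rpow_le_of_forall_conjNormLeOne hq fun y hy =>
    le_mul_of_forall_lt₀ fun C' hC' w hw => ?_
  have hw0 : 0 < w := (weakSumNorm_nonneg x).trans_lt hw
  have h : w⁻¹ * ∑ k, ‖T (x k) (y k)‖ ≤ C := by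
    simpa [norm_smul, abs_of_pos hw0, Finset.mul_sum] using
      hT n _ y (weakNormLeOne_inv_smul hp hw) hy
  calc ∑ k, ‖T (x k) (y k)‖ ≤ C * w := by rwa [inv_mul_le_iff₀ hw0, mul_comm] at h
    _ ≤ C' * w := by gcongr

end SummingConstants

section GelfandIntegral

variable {𝕜 : Type*} [RCLike 𝕜] {E F : Type*} [NormedAddCommGroup E] [NormedSpace 𝕜 E]
  [NormedAddCommGroup F] [NormedSpace 𝕜 F] {Ω : Type*} [MeasurableSpace Ω] {μ ν : Measure Ω}
  {p q : ℝ} {𝒜 : Ω → E →L[𝕜] StrongDual 𝕜 F} {ι κ : Type*}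

variable (μ p q 𝒜) in
/-- The standing hypothesis on `𝒜`: the functions `∑ₙ |⟨𝒜ₜ xₙ, yₙ⟩|` are in `L¹(μ)` for all weakly
`p`-summable `x` and `q'`-summable `y`. -/
def MapsSummableToL1 : Prop :=
  ∀ (x : ℕ → E) (y : ℕ → F), WeaklySummable 𝕜 p x → ConjSummable q y →
    ∫⁻ t, ∑' n, ‖𝒜 t (x n) (y n)‖ₑ ∂μ < ⊤

variable (μ p q 𝒜) in
/-- The set of integrals `∫ ∑ₙ |⟨𝒜ₜ xₙ, yₙ⟩| dμ` over normalized pairs of sequences; its supremum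
is the constant `K`. -/
def pairingIntegrals : Set ℝ :=
  {r | ∃ (x : ℕ → E) (y : ℕ → F), WeaklySummable 𝕜 p x ∧ WeakNormLeOne 𝕜 p x ∧
    ConjNormLeOne q y ∧ r = ∫ t, ∑' n, ‖𝒜 t (x n) (y n)‖ ∂μ}

theorem sSup_pairingIntegrals_nonneg : 0 ≤ sSup (pairingIntegrals μ p q 𝒜) := by
  refine Real.sSup_nonneg ?_
  rintro _ ⟨x, y, -, -, -, rfl⟩
  exact integral_nonneg fun t => tsum_nonneg fun n => norm_nonneg _

theorem exists_gelfandIntegral (h𝒜 : ∀ x y, Integrable (fun t => 𝒜 t x y) μ) {C : ℝ}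
    (hC : ∀ x y, ‖x‖ ≤ 1 → ‖y‖ ≤ 1 → ‖∫ t, 𝒜 t x y ∂μ‖ ≤ C) :
    ∃ I : E →L[𝕜] StrongDual 𝕜 F, ∀ x y, I x y = ∫ t, 𝒜 t x y ∂μ := by
  let B : E →ₗ[𝕜] F →ₗ[𝕜] 𝕜 := LinearMap.mk₂ 𝕜 (fun x y => ∫ t, 𝒜 t x y ∂μ)
    (fun x x' y => by simpa using integral_add (h𝒜 x y) (h𝒜 x' y))
    (fun c x y => by simpa using integral_const_mul c fun t => 𝒜 t x y)
    (fun x y y' => by simpa using integral_add (h𝒜 x y) (h𝒜 x y'))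
    (fun c x y => by simpa using integral_const_mul c fun t => 𝒜 t x y)
  have hB_left (x : E) (hx : ‖x‖ ≤ 1) (y : F) : ‖B x y‖ ≤ C * ‖y‖ := by
    simpa using LinearMap.bound_of_ball_bound' one_pos C (B x)
      (fun z hz => hC x z hx (mem_closedBall_zero_iff.1 hz)) y
  have hB (x : E) (y : F) : ‖B x y‖ ≤ C * ‖x‖ * ‖y‖ := by
    simpa [mul_right_comm] using LinearMap.bound_of_ball_bound' one_pos (C * ‖y‖) (B.flip y)
      (fun z hz => hB_left z (mem_closedBall_zero_iff.1 hz) y) x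
  exact ⟨B.mkContinuous₂ C hB, fun x y => rfl⟩

namespace MapsSummableToL1

theorem mono (h : MapsSummableToL1 μ p q 𝒜) (hν : ν ≤ μ) : MapsSummableToL1 ν p q 𝒜 :=
  fun x y hx hy => (lintegral_mono' hν le_rfl).trans_lt (h x y hx hy)

theorem lintegral_tsum_lt_top [Countable ι] (h : MapsSummableToL1 μ p q 𝒜) (hp : p ≠ 0)
    {x : ι → E} {y : ι → F} (hx : WeaklySummable 𝕜 p x) (hy : ConjSummable q y) :
    ∫⁻ t, ∑' k, ‖𝒜 t (x k) (y k)‖ₑ ∂μ < ⊤ := by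
  obtain ⟨e, he⟩ := Countable.exists_injective_nat ι
  have hext := h _ _ (hx.extend_zero he hp) (hy.extend_zero he)
  have hsum t : ∑' m, ‖𝒜 t (extend e x 0 m) (extend e y 0 m)‖ₑ = ∑' k, ‖𝒜 t (x k) (y k)‖ₑ := by
    rw [comp_extend_zero₂ he x y (g := fun u v => ‖𝒜 t u v‖ₑ) (by simp), tsum_extend_zero he]
  simpa only [hsum] using hext

theorem integrable (h : MapsSummableToL1 μ p q 𝒜) (hp : p ≠ 0)
    (h𝒜 : ∀ x y, AEStronglyMeasurable (fun t => 𝒜 t x y) μ) (x : E) (y : F) :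
    Integrable (fun t => 𝒜 t x y) μ :=
  ⟨h𝒜 x y, by simpa [HasFiniteIntegral] using
    h.lintegral_tsum_lt_top hp (.of_finite fun _ : Unit => x) (.of_finite fun _ => y)⟩

end MapsSummableToL1

theorem lintegral_tsum_prod_smul [Countable ι] [Countable κ]
    (h𝒜 : ∀ x y, AEStronglyMeasurable (fun t => 𝒜 t x y) μ) (c : ι → 𝕜) (x : ι → κ → E)
    (y : ι → κ → F) :
    ∫⁻ t, ∑' z : ι × κ, ‖𝒜 t (c z.1 • x z.1 z.2) (c z.1 • y z.1 z.2)‖ₑ ∂μ =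
      ∑' j, ‖c j‖ₑ ^ 2 * ∫⁻ t, ∑' n, ‖𝒜 t (x j n) (y j n)‖ₑ ∂μ := by
  have hsmul t j n : ‖𝒜 t (c j • x j n) (c j • y j n)‖ₑ = ‖c j‖ₑ ^ 2 * ‖𝒜 t (x j n) (y j n)‖ₑ := by
    simp [pow_two, mul_assoc]
  have hmeas j : AEMeasurable (fun t => ∑' n, ‖𝒜 t (x j n) (y j n)‖ₑ) μ :=
    .tsum fun n => (h𝒜 _ _).enorm
  simp only [ENNReal.tsum_prod', hsmul, ENNReal.tsum_mul_left]
  rw [lintegral_tsum fun j => (hmeas j).const_mul _]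
  simp only [lintegral_const_mul'' _ (hmeas _)]

namespace MapsSummableToL1

theorem exists_lintegral_tsum_le (h : MapsSummableToL1 μ p q 𝒜) (hp : 0 < p)
    (h𝒜 : ∀ x y, AEStronglyMeasurable (fun t => 𝒜 t x y) μ) :
    ∃ C : NNReal, ∀ (x : ℕ → E) (y : ℕ → F), WeaklySummable 𝕜 p x → WeakNormLeOne 𝕜 p x →
      ConjNormLeOne q y → ∫⁻ t, ∑' n, ‖𝒜 t (x n) (y n)‖ₑ ∂μ ≤ C := by
  by_contra! hunbounded
  choose x y hx hx1 hy hlt using fun j : ℕ => hunbounded (4 ^ j)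
  let c : ℕ → 𝕜 := fun j => 2⁻¹ ^ j
  have hfinite := h.lintegral_tsum_lt_top hp.ne'
    (WeaklySummable.prod_smul hp (summable_norm_two_inv_pow_rpow 𝕜 hp) hx hx1)
    (ConjSummable.prod_smul (conjSummable_two_inv_pow 𝕜) hy)
  have hone (j : ℕ) : 1 ≤ ‖c j‖ₑ ^ 2 * ∫⁻ t, ∑' n, ‖𝒜 t (x j n) (y j n)‖ₑ ∂μ :=
    calc (1 : ℝ≥0∞) = ‖c j‖ₑ ^ 2 * (4 ^ j : NNReal) := by
          have hc : ‖c j‖₊ ^ 2 * 4 ^ j = 1 := by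
            simp only [c, nnnorm_pow, nnnorm_inv, RCLike.nnnorm_two]
            rw [pow_right_comm, ← mul_pow]
            norm_num
          rw [enorm_eq_nnnorm]
          exact_mod_cast hc.symm
      _ ≤ _ := by gcongr; exact (hlt j).le
  refine hfinite.ne (eq_top_iff.2 ?_)
  calc (⊤ : ℝ≥0∞) = ∑' _ : ℕ, 1 := (ENNReal.tsum_const_eq_top_of_ne_zero one_ne_zero).symm
    _ ≤ ∑' j, ‖c j‖ₑ ^ 2 * ∫⁻ t, ∑' n, ‖𝒜 t (x j n) (y j n)‖ₑ ∂μ := ENNReal.tsum_le_tsum hone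
    _ = _ := (lintegral_tsum_prod_smul h𝒜 c x y).symm

theorem bddAbove_pairingIntegrals (h : MapsSummableToL1 μ p q 𝒜) (hp : 0 < p)
    (h𝒜 : ∀ x y, AEStronglyMeasurable (fun t => 𝒜 t x y) μ) :
    BddAbove (pairingIntegrals μ p q 𝒜) := by
  obtain ⟨C, hC⟩ := h.exists_lintegral_tsum_le hp h𝒜
  refine ⟨C, ?_⟩
  rintro _ ⟨x, y, hx, hx1, hy, rfl⟩
  refine (le_abs_self _).trans ?_
  have henorm : ‖∫ t, ∑' n, ‖𝒜 t (x n) (y n)‖ ∂μ‖ₑ ≤ C :=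
    calc ‖∫ t, ∑' n, ‖𝒜 t (x n) (y n)‖ ∂μ‖ₑ
        ≤ ∫⁻ t, ‖∑' n, ‖𝒜 t (x n) (y n)‖‖ₑ ∂μ := enorm_integral_le_lintegral_enorm _
      _ ≤ ∫⁻ t, ∑' n, ‖𝒜 t (x n) (y n)‖ₑ ∂μ :=
          lintegral_mono fun t => enorm_tsum_le_tsum_enorm.trans_eq (by simp)
      _ ≤ C := hC x y hx hx1 hy
  exact_mod_cast henorm

theorem sum_norm_integral_le [Fintype ι] (h : MapsSummableToL1 μ p q 𝒜) (hp : 0 < p)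
    (h𝒜 : ∀ x y, AEStronglyMeasurable (fun t => 𝒜 t x y) μ) {x : ι → E} {y : ι → F}
    (hx : WeakNormLeOne 𝕜 p x) (hy : ConjNormLeOne q y) :
    ∑ k, ‖∫ t, 𝒜 t (x k) (y k) ∂μ‖ ≤ sSup (pairingIntegrals μ p q 𝒜) := by
  obtain ⟨e, he⟩ := Countable.exists_injective_nat ι
  have hsum t : ∑' m, ‖𝒜 t (extend e x 0 m) (extend e y 0 m)‖ = ∑ k, ‖𝒜 t (x k) (y k)‖ := by
    rw [comp_extend_zero₂ he x y (g := fun u v => ‖𝒜 t u v‖) (by simp), tsum_extend_zero he,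
      tsum_fintype]
  calc ∑ k, ‖∫ t, 𝒜 t (x k) (y k) ∂μ‖
      ≤ ∑ k, ∫ t, ‖𝒜 t (x k) (y k)‖ ∂μ :=
        Finset.sum_le_sum fun k _ => norm_integral_le_integral_norm _
    _ = ∫ t, ∑ k, ‖𝒜 t (x k) (y k)‖ ∂μ :=
        (integral_finsetSum _ fun k _ => (h.integrable hp.ne' h𝒜 (x k) (y k)).norm).symm
    _ = ∫ t, ∑' m, ‖𝒜 t (extend e x 0 m) (extend e y 0 m)‖ ∂μ := by simp only [hsum]
    _ ≤ sSup (pairingIntegrals μ p q 𝒜) :=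
        le_csSup (h.bddAbove_pairingIntegrals hp h𝒜) ⟨_, _,
          (WeaklySummable.of_finite x).extend_zero he hp.ne', hx.extend_zero he hp.ne',
          hy.extend_zero he, rfl⟩

theorem norm_integral_le (h : MapsSummableToL1 μ p q 𝒜) (hp : 0 < p)
    (h𝒜 : ∀ x y, AEStronglyMeasurable (fun t => 𝒜 t x y) μ) {x : E} {y : F} (hx : ‖x‖ ≤ 1)
    (hy : ‖y‖ ≤ 1) : ‖∫ t, 𝒜 t x y ∂μ‖ ≤ sSup (pairingIntegrals μ p q 𝒜) := by
  simpa using h.sum_norm_integral_le hp h𝒜 (weakNormLeOne_const (ι := Unit) hp.le hx)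
    (conjNormLeOne_const hy)

end MapsSummableToL1

theorem stmt7_general (hp : 0 < p) (hq : 1 ≤ q)
    (h𝒜 : ∀ x y, AEStronglyMeasurable (fun t => 𝒜 t x y) μ) (h : MapsSummableToL1 μ p q 𝒜) :
    (∀ x y, Integrable (fun t => 𝒜 t x y) μ) ∧
    ∀ ν ≤ μ, ∃ I : E →L[𝕜] StrongDual 𝕜 F,
      (∀ x y, I x y = ∫ t, 𝒜 t x y ∂ν) ∧
      (∃ C, 0 ≤ C ∧ IsSummingConst q p I C) ∧
      IsSummingConst q p I (sSup (pairingIntegrals ν p q 𝒜)) := by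
  refine ⟨h.integrable hp.ne' h𝒜, fun ν hν => ?_⟩
  have hν𝒜 x y : AEStronglyMeasurable (fun t => 𝒜 t x y) ν := (h𝒜 x y).mono_measure hν
  have hνL1 : MapsSummableToL1 ν p q 𝒜 := h.mono hν
  obtain ⟨I, hI⟩ := exists_gelfandIntegral (hνL1.integrable hp.ne' hν𝒜)
    fun _ _ => hνL1.norm_integral_le hp hν𝒜
  have hK : IsSummingConst q p I (sSup (pairingIntegrals ν p q 𝒜)) :=
    isSummingConst_of_sum_norm_apply_le hp hq fun n x y hx hy => by
      simpa only [hI] using hνL1.sum_norm_integral_le hp hν𝒜 hx hy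
  exact ⟨I, hI, ⟨_, sSup_pairingIntegrals_nonneg, hK⟩, hK⟩

end GelfandIntegral

/-- if `𝒜 : Ω → B(E, F*)` is weakly* measurable and for all weakly
`p`-summable `(x_n)` and `q'`-summable `(y_n)` the function
`t ↦ ∑_n |⟨𝒜_t x_n, y_n⟩|` is in `L¹(μ)`, then `𝒜` is weakly* integrable and every
Gel'fand integral `∫_S 𝒜 dμ` is `(q,p)`-summing, with
`K(S) = sup { ∫_S ∑_n |⟨𝒜_t x_n, y_n⟩| dμ : ‖(x_n)‖_{p,w} ≤ 1, ‖(y_n)‖_{q'} ≤ 1 }`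
as an admissible `(q,p)`-summing constant. -/
theorem stmt7 (E F : Type*) [NormedAddCommGroup E] [NormedSpace ℂ E] [CompleteSpace E]
    [NormedAddCommGroup F] [NormedSpace ℂ F] [CompleteSpace F]
    {Ω : Type*} [MeasurableSpace Ω] (μ : Measure Ω)
    (p q : ℝ) (hp : 1 ≤ p) (hpq : p ≤ q)
    (𝒜 : Ω → (E →L[ℂ] StrongDual ℂ F))
    (hmeas : ∀ (x : E) (y : F), Measurable (fun t => (𝒜 t x) y))
    (hL1 : ∀ (x : ℕ → E) (y : ℕ → F),
      (∀ φ : StrongDual ℂ E, Summable fun n => ‖φ (x n)‖ ^ p) →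
      (if 1 < q then Summable (fun n => ‖y n‖ ^ (q / (q - 1)))
        else BddAbove (Set.range fun n => ‖y n‖)) →
      ∫⁻ t, ∑' n, (‖(𝒜 t (x n)) (y n)‖₊ : ℝ≥0∞) ∂μ < ⊤) :
    (∀ (x : E) (y : F), Integrable (fun t => (𝒜 t x) y) μ) ∧
    ∀ S : Set Ω, MeasurableSet S →
      ∃ I : E →L[ℂ] StrongDual ℂ F,
        (∀ (x : E) (y : F), (I x) y = ∫ t in S, (𝒜 t x) y ∂μ) ∧
        (∃ C : ℝ, 0 ≤ C ∧ IsSummingConstQP q p I C) ∧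
        IsSummingConstQP q p I
          (sSup {r : ℝ | ∃ (x : ℕ → E) (y : ℕ → F),
            (∀ φ : StrongDual ℂ E, Summable fun n => ‖φ (x n)‖ ^ p) ∧
            (∀ φ : StrongDual ℂ E, ‖φ‖ ≤ 1 → (∑' n, ‖φ (x n)‖ ^ p) ≤ 1) ∧
            (if 1 < q then
                Summable (fun n => ‖y n‖ ^ (q / (q - 1))) ∧
                  (∑' n, ‖y n‖ ^ (q / (q - 1))) ≤ 1
              else ∀ n, ‖y n‖ ≤ 1) ∧
            r = ∫ t in S, ∑' n, ‖(𝒜 t (x n)) (y n)‖ ∂μ}) := by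
  have h := stmt7_general (one_pos.trans_le hp) (hp.trans hpq)
    (fun x y => (hmeas x y).aestronglyMeasurable) hL1
  exact ⟨h.1, fun S _ => h.2 _ Measure.restrict_le_self⟩
end

section
/- Let (Ω, 𝔐, μ) be a measure space, E and F complex Banach spaces, 1 ≤ p ≤ q < ∞ with q' the conjugate exponent of q, and let 𝒜 : Ω → B(E, F*) be weakly* measurable such that for every weakly p-summable sequence (x_n)_{n=1}^∞ in E and every q'-summable sequence (y_n)_{n=1}^∞ in F the function t ↦ ∑_{n=1}^∞ |⟨𝒜_t x_n, y_n⟩| belongs to L¹(Ω, 𝔐, μ). Then sup { ∫_Ω ∑_{n=1}^∞ |⟨𝒜_t x_n, y_n⟩| dμ(t) : (x_n) weakly p-summable in E with ‖(x_n)‖_{p,w} ≤ 1, (y_n) q'-summable in F with ‖(y_n)‖_{q'} ≤ 1 } < +∞. -/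
open MeasureTheory ENNReal

/-!
Were the supremum infinite, one could choose, for every `k`, a pair of sequences in the two unit
balls whose pairing integral is as large as desired. Multiply the `k`-th pair by `c ^ k`, where
`0 < ‖c‖ < 1`, and interleave all pairs into one. Since `∑ ‖c ^ k‖ ^ s` converges for every `s > 0`,
the two interleaved sequences are still weakly `p`-summable and `r`-summable, so their pairing
integral is finite by hypothesis. It dominates `‖c ^ k‖ ^ 2` times the integral of the `k`-th pair
for every `k`, hence every natural number if the integral of the `k`-th pair exceeds
`k / ‖c ^ k‖ ^ 2`.
-/

section UnitBall

variable {ι κ 𝕜 E : Type*} [NormedAddCommGroup E] {p : ℝ≥0∞} {s : ℝ}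

variable (ι E p) in
/-- The closed unit ball of `ℓ^p(ι, E)`, as a set of unbundled families. -/
def lpUnitBall : Set (ι → E) :=
  {x | ∃ h : Memℓp x p, ‖(⟨x, h⟩ : lp (fun _ : ι => E) p)‖ ≤ 1}

lemma mem_lpUnitBall_top_iff {x : ι → E} : x ∈ lpUnitBall ι E ⊤ ↔ ∀ i, ‖x i‖ ≤ 1 := by
  constructor
  · rintro ⟨hx, hnorm⟩ i
    exact (lp.norm_apply_le_norm top_ne_zero ⟨x, hx⟩ i).trans hnorm
  · exact fun hx => ⟨memℓp_infty ⟨1, by rintro _ ⟨i, rfl⟩; exact hx i⟩,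
      lp.norm_le_of_forall_le zero_le_one hx⟩

lemma mem_lpUnitBall_iff_tsum_le_one (hp : 0 < p.toReal) {x : ι → E} :
    x ∈ lpUnitBall ι E p ↔
      (Summable fun i => ‖x i‖ ^ p.toReal) ∧ ∑' i, ‖x i‖ ^ p.toReal ≤ 1 := by
  rw [← memℓp_gen_iff hp]
  constructor
  · rintro ⟨hx, hnorm⟩
    have htsum := lp.norm_rpow_eq_tsum hp (⟨x, hx⟩ : lp (fun _ : ι => E) p)
    exact ⟨hx, htsum.symm.trans_le (Real.rpow_le_one (lp.norm_nonneg' _) hnorm hp.le)⟩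
  · exact fun ⟨hx, htsum⟩ => ⟨hx, lp.norm_le_of_tsum_le hp zero_le_one (by simpa using htsum)⟩

lemma memℓp_ofReal_iff (hs : 0 < s) {x : ι → E} :
    Memℓp x (.ofReal s) ↔ Summable fun i => ‖x i‖ ^ s := by
  rw [memℓp_gen_iff (by rwa [toReal_ofReal hs.le]), toReal_ofReal hs.le]

lemma mem_lpUnitBall_ofReal_iff (hs : 0 < s) {x : ι → E} :
    x ∈ lpUnitBall ι E (.ofReal s) ↔ (Summable fun i => ‖x i‖ ^ s) ∧ ∑' i, ‖x i‖ ^ s ≤ 1 := by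
  rw [mem_lpUnitBall_iff_tsum_le_one (by rwa [toReal_ofReal hs.le]), toReal_ofReal hs.le]

lemma memℓp_comp_injective {x : ι → E} (hx : Memℓp x p) {e : κ → ι} (he : e.Injective) :
    Memℓp (x ∘ e) p := by
  rcases p.trichotomy with rfl | rfl | hp
  · exact memℓp_zero (hx.finite_dsupport.preimage he.injOn)
  · exact memℓp_infty (hx.bddAbove.mono (Set.range_comp_subset_range e fun i => ‖x i‖))
  · exact memℓp_gen ((hx.summable hp).comp_injective he)

lemma memℓp_pow_of_norm_lt_one [NormedDivisionRing 𝕜] {c : 𝕜} (hc : ‖c‖ < 1) (hp : p ≠ 0) :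
    Memℓp (fun k : ℕ => c ^ k) p := by
  rcases eq_or_ne p ⊤ with rfl | hp_top
  · refine memℓp_infty ⟨1, ?_⟩
    rintro _ ⟨k, rfl⟩
    simpa only [norm_pow] using pow_le_one₀ (norm_nonneg c) hc.le
  · have hp_pos : 0 < p.toReal := toReal_pos hp hp_top
    refine memℓp_gen ?_
    simp only [norm_pow, ← Real.rpow_pow_comm (norm_nonneg c)]
    exact summable_geometric_of_lt_one (by positivity)
      (Real.rpow_lt_one (norm_nonneg c) hc hp_pos)

variable [NormedDivisionRing 𝕜] [Module 𝕜 E] [NormSMulClass 𝕜 E]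

lemma memℓp_prod_smul {c : ι → 𝕜} (hc : Memℓp c p) (hp : p ≠ 0) {x : ι → κ → E}
    (hx : ∀ i, x i ∈ lpUnitBall κ E p) :
    Memℓp (fun z : ι × κ => c z.1 • x z.1 z.2) p := by
  rcases eq_or_ne p ⊤ with rfl | hp_top
  · obtain ⟨C, hC⟩ := hc.bddAbove
    refine memℓp_infty ⟨C, ?_⟩
    rintro _ ⟨⟨i, n⟩, rfl⟩
    refine (norm_smul _ _).trans_le ?_
    exact (mul_le_of_le_one_right (norm_nonneg _) (mem_lpUnitBall_top_iff.1 (hx i) n)).trans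
      (hC ⟨i, rfl⟩)
  · have hp_pos : 0 < p.toReal := toReal_pos hp hp_top
    simp only [mem_lpUnitBall_iff_tsum_le_one hp_pos] at hx
    refine memℓp_gen ((summable_prod_of_nonneg fun _ => by positivity).2 ?_)
    simp only [norm_smul, Real.mul_rpow (norm_nonneg _) (norm_nonneg _), tsum_mul_left]
    exact ⟨fun i => (hx i).1.mul_left _, .of_nonneg_of_le (fun i => by positivity)
      (fun i => mul_le_of_le_one_right (by positivity) (hx i).2) (hc.summable hp_pos)⟩

end UnitBall

section Interleave

variable {𝕜 E F Φ : Type*}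

/-- The sequences `c k • x k`, `k : ℕ`, arranged into a single sequence: its term of index
`Nat.pair k n` is `c k • x k n`. -/
def interleave [SMul 𝕜 E] (c : ℕ → 𝕜) (x : ℕ → ℕ → E) (m : ℕ) : E :=
  c m.unpair.1 • x m.unpair.1 m.unpair.2

lemma interleave_pair [SMul 𝕜 E] (c : ℕ → 𝕜) (x : ℕ → ℕ → E) (k n : ℕ) :
    interleave c x (k.pair n) = c k • x k n := by
  simp only [interleave, Nat.unpair_pair]

lemma map_interleave [SMul 𝕜 E] [SMul 𝕜 F] [FunLike Φ E F] [MulActionHomClass Φ 𝕜 E F] (φ : Φ)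
    (c : ℕ → 𝕜) (x : ℕ → ℕ → E) (m : ℕ) :
    φ (interleave c x m) = interleave c (fun k n => φ (x k n)) m :=
  map_smul φ _ _

lemma memℓp_interleave [NormedDivisionRing 𝕜] [NormedAddCommGroup E] [Module 𝕜 E]
    [NormSMulClass 𝕜 E] {p : ℝ≥0∞} (hp : p ≠ 0) {c : ℕ → 𝕜} (hc : Memℓp c p) {x : ℕ → ℕ → E}
    (hx : ∀ k, x k ∈ lpUnitBall ℕ E p) : Memℓp (interleave c x) p :=
  memℓp_comp_injective (memℓp_prod_smul hc hp hx) Nat.pairEquiv.symm.injective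

end Interleave

section Weak

variable {ι 𝕜 E : Type*} [NontriviallyNormedField 𝕜] [SeminormedAddCommGroup E]
  [NormedSpace 𝕜 E] {p : ℝ≥0∞} {s : ℝ}

variable (𝕜) in
/-- Weak `p`-summability of a family: its image under every continuous linear functional
lies in `ℓ^p`. -/
def WeaklyMemℓp (x : ι → E) (p : ℝ≥0∞) : Prop :=
  ∀ φ : StrongDual 𝕜 E, Memℓp (fun i => φ (x i)) p

variable (ι 𝕜 E p) in
/-- The families `x` whose weak norm `‖x‖_{p,w}` is at most one. -/
def weakLpUnitBall : Set (ι → E) :=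
  {x | ∀ φ : StrongDual 𝕜 E, ‖φ‖ ≤ 1 → (fun i => φ (x i)) ∈ lpUnitBall ι 𝕜 p}

lemma weaklyMemℓp_of_forall_norm_le_one {x : ι → E}
    (hx : ∀ φ : StrongDual 𝕜 E, ‖φ‖ ≤ 1 → Memℓp (fun i => φ (x i)) p) : WeaklyMemℓp 𝕜 x p := by
  intro φ
  obtain ⟨a, ha⟩ := NormedField.exists_lt_norm 𝕜 ‖φ‖
  have ha_pos : 0 < ‖a‖ := (norm_nonneg φ).trans_lt ha
  have hφ : ‖a⁻¹ • φ‖ ≤ 1 := by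
    rw [norm_smul, norm_inv]
    exact inv_mul_le_one_of_le₀ ha.le ha_pos.le
  simpa only [smul_apply, smul_eq_mul,
    mul_inv_cancel_left₀ (norm_pos_iff.1 ha_pos)] using (hx _ hφ).const_mul a

lemma weaklyMemℓp_interleave (hp : p ≠ 0) {c : ℕ → 𝕜} (hc : Memℓp c p) {x : ℕ → ℕ → E}
    (hx : ∀ k, x k ∈ weakLpUnitBall ℕ 𝕜 E p) : WeaklyMemℓp 𝕜 (interleave c x) p :=
  weaklyMemℓp_of_forall_norm_le_one fun φ hφ => by
    simpa only [map_interleave] using memℓp_interleave hp hc fun k => hx k φ hφ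

lemma weaklyMemℓp_ofReal_iff (hs : 0 < s) {x : ι → E} :
    WeaklyMemℓp 𝕜 x (.ofReal s) ↔ ∀ φ : StrongDual 𝕜 E, Summable fun i => ‖φ (x i)‖ ^ s :=
  forall_congr' fun _ => memℓp_ofReal_iff hs

lemma mem_weakLpUnitBall_ofReal_iff (hs : 0 < s) {x : ι → E} :
    x ∈ weakLpUnitBall ι 𝕜 E (.ofReal s) ↔
      (∀ φ : StrongDual 𝕜 E, Summable fun i => ‖φ (x i)‖ ^ s) ∧
        ∀ φ : StrongDual 𝕜 E, ‖φ‖ ≤ 1 → ∑' i, ‖φ (x i)‖ ^ s ≤ 1 := by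
  rw [← weaklyMemℓp_ofReal_iff hs]
  constructor
  · exact fun hx => ⟨weaklyMemℓp_of_forall_norm_le_one fun φ hφ => (hx φ hφ).1,
      fun φ hφ => ((mem_lpUnitBall_ofReal_iff hs).1 (hx φ hφ)).2⟩
  · exact fun ⟨hx, htsum⟩ φ hφ =>
      (mem_lpUnitBall_ofReal_iff hs).2 ⟨(memℓp_ofReal_iff hs).1 (hx φ), htsum φ hφ⟩

end Weak

section ConjExponent

variable {ι E : Type*} [NormedAddCommGroup E] {q : ℝ}

lemma conjExponent_ofReal_of_one_lt (hq : 1 < q) :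
    conjExponent (.ofReal q) = .ofReal (q / (q - 1)) := by
  have hq_sub : 0 < q - 1 := sub_pos.2 hq
  rw [conjExponent, ← ofReal_one, ← ofReal_sub _ zero_le_one, ← ofReal_inv_of_pos hq_sub,
    ← ofReal_add zero_le_one (by positivity)]
  congr 1
  field_simp
  ring

lemma conjExponent_ofReal_of_le_one (hq : q ≤ 1) : conjExponent (.ofReal q) = ⊤ := by
  simp [conjExponent, tsub_eq_zero_of_le (ofReal_le_one.2 hq)]

lemma memℓp_conjExponent_ofReal_iff {y : ι → E} :
    Memℓp y (conjExponent (.ofReal q)) ↔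
      if 1 < q then Summable fun i => ‖y i‖ ^ (q / (q - 1))
      else BddAbove (Set.range fun i => ‖y i‖) := by
  split_ifs with hq
  · rw [conjExponent_ofReal_of_one_lt hq,
      memℓp_ofReal_iff (div_pos (zero_lt_one.trans hq) (sub_pos.2 hq))]
  · rw [conjExponent_ofReal_of_le_one (not_lt.1 hq), memℓp_infty_iff]

lemma mem_lpUnitBall_conjExponent_ofReal_iff {y : ι → E} :
    y ∈ lpUnitBall ι E (conjExponent (.ofReal q)) ↔
      if 1 < q then
        (Summable fun i => ‖y i‖ ^ (q / (q - 1))) ∧ ∑' i, ‖y i‖ ^ (q / (q - 1)) ≤ 1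
      else ∀ i, ‖y i‖ ≤ 1 := by
  split_ifs with hq
  · rw [conjExponent_ofReal_of_one_lt hq,
      mem_lpUnitBall_ofReal_iff (div_pos (zero_lt_one.trans hq) (sub_pos.2 hq))]
  · rw [conjExponent_ofReal_of_le_one (not_lt.1 hq), mem_lpUnitBall_top_iff]

end ConjExponent

section Pairing

variable {ι 𝕜 E F G Ω : Type*} [NormedField 𝕜] [AddCommGroup E] [Module 𝕜 E] [AddCommGroup F]
  [Module 𝕜 F] [SeminormedAddCommGroup G] [NormedSpace 𝕜 G] [MeasurableSpace Ω] {μ : Measure Ω}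

variable (μ) in
/-- The integral `∫ ∑ₙ ‖B_t(xₙ, yₙ)‖ dμ(t)` of a field `B` of bilinear maps along two families. -/
noncomputable def pairingIntegral (B : Ω → E →ₗ[𝕜] F →ₗ[𝕜] G) (x : ι → E) (y : ι → F) : ℝ≥0∞ :=
  ∫⁻ t, ∑' i, ‖B t (x i) (y i)‖ₑ ∂μ

lemma mul_pairingIntegral_le_interleave (B : Ω → E →ₗ[𝕜] F →ₗ[𝕜] G) (c d : ℕ → 𝕜)
    (x : ℕ → ℕ → E) (y : ℕ → ℕ → F) (k : ℕ) :
    ‖c k‖ₑ * ‖d k‖ₑ * pairingIntegral μ B (x k) (y k) ≤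
      pairingIntegral μ B (interleave c x) (interleave d y) := by
  have hpair : Function.Injective (Nat.pair k) := fun m n h => (Nat.pair_eq_pair.1 h).2
  rw [pairingIntegral, ← lintegral_const_mul' _ _ (mul_ne_top enorm_ne_top enorm_ne_top)]
  refine lintegral_mono fun t => ?_
  calc ‖c k‖ₑ * ‖d k‖ₑ * ∑' n, ‖B t (x k n) (y k n)‖ₑ
      = ∑' n, ‖B t (interleave c x (k.pair n)) (interleave d y (k.pair n))‖ₑ := by
        simp only [interleave_pair, map_smul, LinearMap.smul_apply, enorm_smul,
          ← ENNReal.tsum_mul_left, mul_assoc, mul_left_comm]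
    _ ≤ ∑' m, ‖B t (interleave c x m) (interleave d y m)‖ₑ :=
        ENNReal.tsum_comp_le_tsum_of_injective hpair _

end Pairing

theorem stmt8_general {𝕜 E F G Ω : Type*} [NontriviallyNormedField 𝕜] [SeminormedAddCommGroup E]
    [NormedSpace 𝕜 E] [NormedAddCommGroup F] [NormedSpace 𝕜 F] [SeminormedAddCommGroup G]
    [NormedSpace 𝕜 G] [MeasurableSpace Ω] (μ : Measure Ω) {p r : ℝ≥0∞} (hp : p ≠ 0) (hr : r ≠ 0)
    (B : Ω → E →ₗ[𝕜] F →ₗ[𝕜] G)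
    (hB : ∀ (x : ℕ → E) (y : ℕ → F), WeaklyMemℓp 𝕜 x p → Memℓp y r →
      pairingIntegral μ B x y < ⊤) :
    sSup {a | ∃ (x : ℕ → E) (y : ℕ → F), x ∈ weakLpUnitBall ℕ 𝕜 E p ∧ y ∈ lpUnitBall ℕ F r ∧
      a = pairingIntegral μ B x y} < ⊤ := by
  by_contra htop
  obtain ⟨c, hc_pos, hc⟩ := NormedField.exists_norm_lt_one 𝕜
  have hw_zero (k : ℕ) : ‖c ^ k‖ₑ * ‖c ^ k‖ₑ ≠ 0 := by
    simp [norm_pos_iff.1 hc_pos]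
  have hw_top (k : ℕ) : ‖c ^ k‖ₑ * ‖c ^ k‖ₑ ≠ ⊤ := mul_ne_top enorm_ne_top enorm_ne_top
  choose a ha hlarge using fun k : ℕ => sSup_eq_top.1 (not_lt_top_iff.1 htop) _
    (div_lt_top (natCast_ne_top k) (hw_zero k))
  choose x y hx hy hxy using ha
  have hpow {s : ℝ≥0∞} (hs : s ≠ 0) : Memℓp (fun k : ℕ => c ^ k) s :=
    memℓp_pow_of_norm_lt_one hc hs
  have hfin : pairingIntegral μ B (interleave (c ^ ·) x) (interleave (c ^ ·) y) < ⊤ :=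
    hB _ _ (weaklyMemℓp_interleave hp (hpow hp) hx) (memℓp_interleave hr (hpow hr) hy)
  obtain ⟨k, hk⟩ := ENNReal.exists_nat_gt hfin.ne
  refine hk.not_ge ?_
  calc (k : ℝ≥0∞) ≤ pairingIntegral μ B (x k) (y k) * (‖c ^ k‖ₑ * ‖c ^ k‖ₑ) :=
        (ENNReal.div_le_iff (hw_zero k) (hw_top k)).1 (hxy k ▸ (hlarge k).le)
    _ = ‖c ^ k‖ₑ * ‖c ^ k‖ₑ * pairingIntegral μ B (x k) (y k) := mul_comm _ _
    _ ≤ pairingIntegral μ B (interleave (c ^ ·) x) (interleave (c ^ ·) y) :=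
        mul_pairingIntegral_le_interleave B (c ^ ·) (c ^ ·) x y k

/-- if `𝒜 : Ω → B(E, F*)` is weakly* measurable and for all weakly
`p`-summable `(x_n)` and `q'`-summable `(y_n)` the function
`t ↦ ∑_n |⟨𝒜_t x_n, y_n⟩|` is in `L¹(μ)`, then the supremum of
`∫_Ω ∑_n |⟨𝒜_t x_n, y_n⟩| dμ` over `‖(x_n)‖_{p,w} ≤ 1` and `‖(y_n)‖_{q'} ≤ 1`
is finite. -/
theorem stmt8 (E F : Type*) [NormedAddCommGroup E] [NormedSpace ℂ E] [CompleteSpace E]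
    [NormedAddCommGroup F] [NormedSpace ℂ F] [CompleteSpace F]
    {Ω : Type*} [MeasurableSpace Ω] (μ : Measure Ω)
    (p q : ℝ) (hp : 1 ≤ p) (hpq : p ≤ q)
    (𝒜 : Ω → (E →L[ℂ] StrongDual ℂ F))
    (hmeas : ∀ (x : E) (y : F), Measurable (fun t => (𝒜 t x) y))
    (hL1 : ∀ (x : ℕ → E) (y : ℕ → F),
      (∀ φ : StrongDual ℂ E, Summable fun n => ‖φ (x n)‖ ^ p) →
      (if 1 < q then Summable (fun n => ‖y n‖ ^ (q / (q - 1)))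
        else BddAbove (Set.range fun n => ‖y n‖)) →
      ∫⁻ t, ∑' n, (‖(𝒜 t (x n)) (y n)‖₊ : ℝ≥0∞) ∂μ < ⊤) :
    sSup {r : ℝ≥0∞ | ∃ (x : ℕ → E) (y : ℕ → F),
      (∀ φ : StrongDual ℂ E, Summable fun n => ‖φ (x n)‖ ^ p) ∧
      (∀ φ : StrongDual ℂ E, ‖φ‖ ≤ 1 → (∑' n, ‖φ (x n)‖ ^ p) ≤ 1) ∧
      (if 1 < q then
          Summable (fun n => ‖y n‖ ^ (q / (q - 1))) ∧
            (∑' n, ‖y n‖ ^ (q / (q - 1))) ≤ 1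
        else ∀ n, ‖y n‖ ≤ 1) ∧
      r = ∫⁻ t, ∑' n, (‖(𝒜 t (x n)) (y n)‖₊ : ℝ≥0∞) ∂μ} < ⊤ := by
  have hp_pos : 0 < p := zero_lt_one.trans_le hp
  have hfin := stmt8_general μ (ofReal_pos.2 hp_pos).ne'
    (r := conjExponent (.ofReal q)) (by simp [conjExponent])
    fun t => ContinuousLinearMap.coeLM ℂ ∘ₗ (𝒜 t).toLinearMap
  simp only [weaklyMemℓp_ofReal_iff hp_pos, memℓp_conjExponent_ofReal_iff,
    mem_weakLpUnitBall_ofReal_iff hp_pos, mem_lpUnitBall_conjExponent_ofReal_iff, and_assoc] at hfin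
  exact hfin hL1
end

section
/- Let H be an infinite-dimensional separable complex Hilbert space with orthonormal basis (e_n)_{n≥1}, let q ≥ 2 with conjugate exponent q', and define 𝒜 : [0,1) → B(H) by 𝒜_t h = n·⟨h, e_1⟩·e_n for t ∈ [1/(n+1), 1/n) (n ≥ 1) and 𝒜_0 = 0. Then for every weakly 2-summable sequence (f_m)_{m=1}^∞ in H and every q'-summable sequence (g_m)_{m=1}^∞ in H, ∫_{[0,1)} ∑_{m=1}^∞ |⟨𝒜_t f_m, g_m⟩| dt ≤ M · ‖(f_m)‖_{2,w} · ‖(g_m)‖_{q'} < +∞, where the integral is with respect to Lebesgue measure and M = √(π²/6 − 1) = √(∑_{n=1}^∞ 1/(n+1)²). -/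
open MeasureTheory ENNReal

/-!
On the step `[1/(n+1), 1/n)`, of length `1/(n(n+1))`, the integrand equals
`n ∑_m |⟨f_m, e_1⟩| |⟨e_n, g_m⟩|`, so the integral is
`∑_m |⟨f_m, e_1⟩| ∑_n |⟨e_n, g_m⟩| / (n+1)`. By Cauchy–Schwarz and Bessel's inequality the sum over
`n` is at most `M ‖g_m‖`. A second application of Cauchy–Schwarz, together with the contractive
inclusion `ℓ^{q'} ⊆ ℓ²` (as `q' ≤ 2`), bounds the sum over `m`. The weak norm of `(f_m)` is finite
by the closed graph theorem.
-/

open Filter Set Topology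

section Sums

variable {ι : Type*}

lemma tsum_mul_le_Lp_mul_Lq {p q : ℝ} (hpq : p.HolderConjugate q) (x y : ι → ℝ≥0∞) :
    ∑' i, x i * y i ≤ (∑' i, x i ^ p) ^ (1 / p) * (∑' i, y i ^ q) ^ (1 / q) := by
  have hp := hpq.pos
  have hq := hpq.symm.pos
  rw [ENNReal.tsum_eq_iSup_sum]
  refine iSup_le fun s => (ENNReal.inner_le_Lp_mul_Lq s x y hpq).trans ?_
  gcongr <;> exact ENNReal.sum_le_tsum s

lemma tsum_rpow_le_rpow_tsum {s : ℝ} (hs : 1 ≤ s) (x : ι → ℝ≥0∞) :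
    ∑' i, x i ^ s ≤ (∑' i, x i) ^ s := by
  have rpow_eq (a : ℝ≥0∞) : a ^ s = a * a ^ (s - 1) := by
    conv_lhs => rw [← add_sub_cancel 1 s]
    rw [ENNReal.rpow_add_of_nonneg 1 (s - 1) zero_le_one (sub_nonneg.2 hs), ENNReal.rpow_one]
  calc ∑' i, x i ^ s = ∑' i, x i * x i ^ (s - 1) := by simp only [rpow_eq]
    _ ≤ ∑' i, x i * (∑' j, x j) ^ (s - 1) := by
        gcongr with i
        exact ENNReal.le_tsum i
    _ = (∑' i, x i) ^ s := by rw [ENNReal.tsum_mul_right, ← rpow_eq]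

lemma rpow_tsum_rpow_anti {p r : ℝ} (hp : 0 < p) (hpr : p ≤ r) (x : ι → ℝ≥0∞) :
    (∑' i, x i ^ r) ^ (1 / r) ≤ (∑' i, x i ^ p) ^ (1 / p) := by
  have hr : 0 < r := hp.trans_le hpr
  calc (∑' i, x i ^ r) ^ (1 / r) = (∑' i, (x i ^ p) ^ (r / p)) ^ (1 / r) := by
        simp only [← ENNReal.rpow_mul, mul_div_cancel₀ r hp.ne']
    _ ≤ ((∑' i, x i ^ p) ^ (r / p)) ^ (1 / r) := by
        gcongr
        exact tsum_rpow_le_rpow_tsum ((one_le_div hp).2 hpr) _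
    _ = (∑' i, x i ^ p) ^ (1 / p) := by
        rw [← ENNReal.rpow_mul, div_mul_div_cancel₀' hr.ne', one_div]

lemma tsum_enorm_rpow_eq_ofReal {E : Type*} [SeminormedAddCommGroup E] {p : ℝ} (hp : 0 ≤ p)
    {x : ι → E} (hx : Summable fun i => ‖x i‖ ^ p) :
    ∑' i, ‖x i‖ₑ ^ p = ENNReal.ofReal (∑' i, ‖x i‖ ^ p) := by
  rw [ENNReal.ofReal_tsum_of_nonneg (fun i => by positivity) hx]
  simp only [← ofReal_norm, ENNReal.ofReal_rpow_of_nonneg (norm_nonneg _) hp]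

lemma rpow_tsum_enorm_rpow_eq_ofReal {E : Type*} [SeminormedAddCommGroup E] {p : ℝ} (hp : 0 ≤ p)
    {x : ι → E} (hx : Summable fun i => ‖x i‖ ^ p) :
    (∑' i, ‖x i‖ₑ ^ p) ^ (1 / p) = ENNReal.ofReal ((∑' i, ‖x i‖ ^ p) ^ (1 / p)) := by
  rw [tsum_enorm_rpow_eq_ofReal hp hx,
    ENNReal.ofReal_rpow_of_nonneg (tsum_nonneg fun i => by positivity) (by positivity)]

lemma hasSum_one_div_add_two_sq :
    HasSum (fun n : ℕ => 1 / ((n : ℝ) + 2) ^ 2) (Real.pi ^ 2 / 6 - 1) := by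
  simpa [Finset.sum_range_succ] using (hasSum_nat_add_iff' 2).2 hasSum_zeta_two

lemma rpow_tsum_enorm_one_div_add_two :
    (∑' n : ℕ, ‖1 / ((n : ℝ) + 2)‖ₑ ^ (2 : ℝ)) ^ (1 / (2 : ℝ)) =
      ENNReal.ofReal √(Real.pi ^ 2 / 6 - 1) := by
  have norm_rpow_two (n : ℕ) : ‖1 / ((n : ℝ) + 2)‖ ^ (2 : ℝ) = 1 / ((n : ℝ) + 2) ^ 2 := by
    rw [Real.rpow_two, Real.norm_eq_abs, sq_abs, one_div_pow]
  rw [rpow_tsum_enorm_rpow_eq_ofReal zero_le_two] <;> simp only [norm_rpow_two]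
  · rw [hasSum_one_div_add_two_sq.tsum_eq, Real.sqrt_eq_rpow]
  · exact hasSum_one_div_add_two_sq.summable

end Sums

section StepFunctions

lemma iUnion_Ico_succ_eq_Ioo {α : Type*} [LinearOrder α] [TopologicalSpace α] [ClosedIciTopology α]
    {a : ℕ → α} {l : α} (hl : ∀ n, l < a n) (ha : Antitone a) (hlim : Tendsto a atTop (𝓝 l)) :
    ⋃ n, Ico (a (n + 1)) (a n) = Ioo l (a 0) := by
  refine Subset.antisymm (iUnion_subset fun n t ht =>
    ⟨(hl _).trans_le ht.1, ht.2.trans_le (ha n.zero_le)⟩) fun t ⟨hlt, ht0⟩ => mem_iUnion.2 ?_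
  have exists_le : ∃ n, a n ≤ t := ((hlim.eventually_lt_const hlt).mono fun _ => le_of_lt).exists
  obtain ⟨n, hn⟩ := Nat.exists_eq_add_one_of_ne_zero fun h : Nat.find exists_le = 0 =>
    (h ▸ Nat.find_spec exists_le).not_gt ht0
  exact ⟨n, hn ▸ Nat.find_spec exists_le, not_le.1 (Nat.find_min exists_le (by omega))⟩

lemma setLIntegral_Ioo_eq_tsum {α : Type*} [LinearOrder α] [TopologicalSpace α]
    [OrderClosedTopology α] [MeasurableSpace α] [OpensMeasurableSpace α] (μ : Measure α)
    {a : ℕ → α} {l : α} (hl : ∀ n, l < a n) (ha : Antitone a) (hlim : Tendsto a atTop (𝓝 l))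
    {F : α → ℝ≥0∞} {c : ℕ → ℝ≥0∞} (hF : ∀ n, ∀ t ∈ Ico (a (n + 1)) (a n), F t = c n) :
    ∫⁻ t in Ioo l (a 0), F t ∂μ = ∑' n, c n * μ (Ico (a (n + 1)) (a n)) := by
  have disjoint_steps : Pairwise (Function.onFun Disjoint fun n => Ico (a (n + 1)) (a n)) :=
    ha.pairwise_disjoint_on_Ico_succ
  rw [← iUnion_Ico_succ_eq_Ioo hl ha hlim,
    lintegral_iUnion (fun _ => measurableSet_Ico) disjoint_steps]
  refine tsum_congr fun n => ?_
  rw [setLIntegral_congr_fun measurableSet_Ico (hF n), setLIntegral_const]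

lemma setLIntegral_Ico_zero_one_eq_tsum {F : ℝ → ℝ≥0∞} {c : ℕ → ℝ≥0∞}
    (hF : ∀ n : ℕ, ∀ t ∈ Ico (1 / ((n : ℝ) + 2)) (1 / ((n : ℝ) + 1)), F t = c n) :
    ∫⁻ t in Ico (0 : ℝ) 1, F t =
      ∑' n : ℕ, c n * ENNReal.ofReal (1 / (((n : ℝ) + 1) * ((n : ℝ) + 2))) := by
  have cast_succ (n : ℕ) : ((n + 1 : ℕ) : ℝ) + 1 = n + 2 := by push_cast; ring
  have steps := setLIntegral_Ioo_eq_tsum volume (a := fun n : ℕ => 1 / ((n : ℝ) + 1)) (l := 0)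
    (fun n => by positivity) (fun m n hmn => by dsimp only; gcongr)
    tendsto_one_div_add_atTop_nhds_zero_nat (by simpa only [cast_succ] using hF)
  rw [← setLIntegral_congr (Ioo_ae_eq_Ico (μ := volume))]
  simp only [cast_succ, Nat.cast_zero, zero_add, div_one, Real.volume_Ico] at steps
  rw [steps]
  refine tsum_congr fun n => ?_
  congr 2
  field_simp
  ring

end StepFunctions

section WeakNorm

variable {𝕜 E F ι : Type*} [RCLike 𝕜]

/-- The operator `x ↦ (φ i x)ᵢ` into `ℓᵖ` determined by a family `φ` of bounded operators whose
values at each point form an `ℓᵖ` sequence. It turns pointwise summability into a uniform bound. -/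
noncomputable def toLpOfPointwise [NormedAddCommGroup E] [NormedSpace 𝕜 E] [CompleteSpace E]
    [NormedAddCommGroup F] [NormedSpace 𝕜 F] [CompleteSpace F] {p : ℝ≥0∞} [Fact (1 ≤ p)]
    (φ : ι → E →L[𝕜] F) (hφ : ∀ x, Memℓp (fun i => φ i x) p) :
    E →L[𝕜] lp (fun _ : ι => F) p :=
  ContinuousLinearMap.ofSeqClosedGraph
    (g := { toFun := fun x => ⟨fun i => φ i x, hφ x⟩
            map_add' := fun x y => by ext i; exact map_add (φ i) x y
            map_smul' := fun c x => by ext i; exact map_smul (φ i) c x })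
    fun u x y hu hy => by
      ext i
      exact tendsto_nhds_unique (((lp.evalCLM 𝕜 (fun _ : ι => F) p i).continuous.tendsto y).comp hy)
        (((φ i).continuous.tendsto x).comp hu)

variable [NormedAddCommGroup E] [InnerProductSpace 𝕜 E]

variable (𝕜) in
/-- The weak `ℓʳ` norm `‖(x_i)‖_{r,w}`. The real supremum is `0` when unbounded, so this is
meaningful only for weakly `r`-summable families. -/
noncomputable def weakNorm (r : ℝ) (x : ι → E) : ℝ :=
  ⨆ h : {h : E // ‖h‖ ≤ 1}, (∑' i, ‖inner 𝕜 (h : E) (x i)‖ ^ r) ^ (1 / r)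

lemma bddAbove_rpow_tsum_norm_inner_rpow [CompleteSpace E] {r : ℝ} (hr : 1 ≤ r) {x : ι → E}
    (hx : ∀ h : E, Summable fun i => ‖inner 𝕜 h (x i)‖ ^ r) :
    BddAbove (range fun h : {h : E // ‖h‖ ≤ 1} =>
      (∑' i, ‖inner 𝕜 (h : E) (x i)‖ ^ r) ^ (1 / r)) := by
  have toReal_r : (ENNReal.ofReal r).toReal = r := ENNReal.toReal_ofReal (zero_le_one.trans hr)
  have toReal_pos : 0 < (ENNReal.ofReal r).toReal := by linarith
  have : Fact (1 ≤ ENNReal.ofReal r) := ⟨ENNReal.one_le_ofReal.2 hr⟩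
  have mem_lp (h : E) : Memℓp (fun i => innerSL 𝕜 (x i) h) (ENNReal.ofReal r) := by
    refine (memℓp_gen_iff toReal_pos).2 ?_
    simpa only [toReal_r, innerSL_apply_apply, norm_inner_symm (x _) h] using hx h
  let T := toLpOfPointwise (fun i => innerSL 𝕜 (x i)) mem_lp
  refine ⟨‖T‖, ?_⟩
  rintro _ ⟨⟨h, hh⟩, rfl⟩
  calc (∑' i, ‖inner 𝕜 h (x i)‖ ^ r) ^ (1 / r) = ‖T h‖ := by
        rw [lp.norm_eq_tsum_rpow toReal_pos, toReal_r]
        simp only [norm_inner_symm h]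
        rfl
    _ ≤ ‖T‖ := T.unit_le_opNorm h hh

lemma rpow_tsum_norm_inner_rpow_le_weakNorm [CompleteSpace E] {r : ℝ} (hr : 1 ≤ r) {x : ι → E}
    (hx : ∀ h : E, Summable fun i => ‖inner 𝕜 h (x i)‖ ^ r) {h : E} (hh : ‖h‖ ≤ 1) :
    (∑' i, ‖inner 𝕜 h (x i)‖ ^ r) ^ (1 / r) ≤ weakNorm 𝕜 r x :=
  le_ciSup (bddAbove_rpow_tsum_norm_inner_rpow hr hx) ⟨h, hh⟩

end WeakNorm

section Bessel

variable {𝕜 E ι κ : Type*} [RCLike 𝕜] [NormedAddCommGroup E] [InnerProductSpace 𝕜 E]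

lemma rpow_tsum_enorm_inner_le_enorm {u : ι → E} (hu : Orthonormal 𝕜 u) (x : E) :
    (∑' i, ‖inner 𝕜 (u i) x‖ₑ ^ (2 : ℝ)) ^ (1 / (2 : ℝ)) ≤ ‖x‖ₑ := by
  rw [rpow_tsum_enorm_rpow_eq_ofReal zero_le_two
    (by simpa only [Real.rpow_two] using hu.inner_products_summable x), ← ofReal_norm]
  simp only [Real.rpow_two, ← Real.sqrt_eq_rpow]
  exact ENNReal.ofReal_le_ofReal
    (Real.sqrt_le_iff.2 ⟨norm_nonneg _, hu.tsum_inner_products_le x⟩)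

lemma tsum_mul_enorm_inner_le {u : ι → E} (hu : Orthonormal 𝕜 u) (w : ι → ℝ≥0∞) (x : E) :
    ∑' i, w i * ‖inner 𝕜 (u i) x‖ₑ ≤ (∑' i, w i ^ (2 : ℝ)) ^ (1 / (2 : ℝ)) * ‖x‖ₑ :=
  (tsum_mul_le_Lp_mul_Lq .two_two w _).trans
    (mul_le_mul_right (rpow_tsum_enorm_inner_le_enorm hu x) _)

lemma tsum_mul_tsum_mul_enorm_inner_le {u : ι → E} (hu : Orthonormal 𝕜 u) {p : ℝ} (hp : 0 < p)
    (hp2 : p ≤ 2) (w : ι → ℝ≥0∞) (y : κ → ℝ≥0∞) (g : κ → E) :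
    ∑' i, w i * ∑' m, y m * ‖inner 𝕜 (u i) (g m)‖ₑ ≤
      (∑' i, w i ^ (2 : ℝ)) ^ (1 / (2 : ℝ)) *
        ((∑' m, y m ^ (2 : ℝ)) ^ (1 / (2 : ℝ)) * (∑' m, ‖g m‖ₑ ^ p) ^ (1 / p)) := by
  set M := (∑' i, w i ^ (2 : ℝ)) ^ (1 / (2 : ℝ))
  calc ∑' i, w i * ∑' m, y m * ‖inner 𝕜 (u i) (g m)‖ₑ
      = ∑' m, y m * ∑' i, w i * ‖inner 𝕜 (u i) (g m)‖ₑ := by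
        simp only [← ENNReal.tsum_mul_left, mul_left_comm (w _)]
        exact ENNReal.tsum_comm
    _ ≤ ∑' m, y m * (M * ‖g m‖ₑ) := by
        gcongr with m
        exact tsum_mul_enorm_inner_le hu w (g m)
    _ = M * ∑' m, y m * ‖g m‖ₑ := by
        simp only [mul_left_comm _ M, ENNReal.tsum_mul_left]
    _ ≤ M * ((∑' m, y m ^ (2 : ℝ)) ^ (1 / (2 : ℝ)) *
          (∑' m, ‖g m‖ₑ ^ (2 : ℝ)) ^ (1 / (2 : ℝ))) := by
        gcongr
        exact tsum_mul_le_Lp_mul_Lq .two_two _ _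
    _ ≤ M * ((∑' m, y m ^ (2 : ℝ)) ^ (1 / (2 : ℝ)) * (∑' m, ‖g m‖ₑ ^ p) ^ (1 / p)) := by
        gcongr
        exact rpow_tsum_rpow_anti hp hp2 _

end Bessel

section RankOneSteps

variable {𝕜 H : Type*} [RCLike 𝕜] [NormedAddCommGroup H] [InnerProductSpace 𝕜 H]

lemma enorm_inner_natCast_smul_inner_smul (n : ℕ) (u v x y : H) :
    ‖inner 𝕜 y ((n : 𝕜) • (inner 𝕜 v x • u))‖ₑ = n * (‖inner 𝕜 v x‖ₑ * ‖inner 𝕜 u y‖ₑ) := by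
  have enorm_inner_comm : ‖inner 𝕜 y u‖ₑ = ‖inner 𝕜 u y‖ₑ := by
    simp only [← ofReal_norm, norm_inner_symm]
  have enorm_natCast : ‖(n : 𝕜)‖ₑ = n := by
    rw [← ofReal_norm, RCLike.norm_natCast, ENNReal.ofReal_natCast]
  rw [inner_smul_right, inner_smul_right, enorm_mul, enorm_mul, enorm_natCast, enorm_inner_comm]

lemma setLIntegral_tsum_enorm_inner_eq {ι : Type*} {e : ℕ → H} {𝒜 : ℝ → H → H}
    (h𝒜 : ∀ n : ℕ, 1 ≤ n → ∀ t ∈ Ico (1 / ((n : ℝ) + 1)) (1 / (n : ℝ)), ∀ h : H,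
      𝒜 t h = (n : 𝕜) • ((inner 𝕜 (e 1) h : 𝕜) • e n)) (f g : ι → H) :
    ∫⁻ t in Ico (0 : ℝ) 1, ∑' m, ‖inner 𝕜 (g m) (𝒜 t (f m))‖ₑ =
      ∑' n : ℕ, ‖1 / ((n : ℝ) + 2)‖ₑ *
        ∑' m, ‖inner 𝕜 (e 1) (f m)‖ₑ * ‖inner 𝕜 (e (n + 1)) (g m)‖ₑ := by
  have on_step (n : ℕ) (t : ℝ) (ht : t ∈ Ico (1 / ((n : ℝ) + 2)) (1 / ((n : ℝ) + 1))) :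
      ∑' m, ‖inner 𝕜 (g m) (𝒜 t (f m))‖ₑ = ((n + 1 : ℕ) : ℝ≥0∞) *
        ∑' m, ‖inner 𝕜 (e 1) (f m)‖ₑ * ‖inner 𝕜 (e (n + 1)) (g m)‖ₑ := by
    have cast_succ : ((n + 1 : ℕ) : ℝ) + 1 = n + 2 := by push_cast; ring
    have ht' : t ∈ Ico (1 / (((n + 1 : ℕ) : ℝ) + 1)) (1 / ((n + 1 : ℕ) : ℝ)) := by
      rwa [cast_succ, Nat.cast_succ]
    simp only [h𝒜 (n + 1) n.succ_pos t ht', enorm_inner_natCast_smul_inner_smul,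
      ENNReal.tsum_mul_left]
  have weight (n : ℕ) : ((n + 1 : ℕ) : ℝ≥0∞) *
      ENNReal.ofReal (1 / (((n : ℝ) + 1) * ((n : ℝ) + 2))) = ‖1 / ((n : ℝ) + 2)‖ₑ := by
    rw [Real.enorm_of_nonneg (by positivity), ← ENNReal.ofReal_natCast,
      ← ENNReal.ofReal_mul (by positivity)]
    congr 1
    push_cast
    field_simp
  rw [setLIntegral_Ico_zero_one_eq_tsum on_step]
  exact tsum_congr fun n => by rw [mul_right_comm, weight]

/-- The exponent `p` plays the role of `q'`, so `p = 1` is the endpoint `q = ∞`. -/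
theorem stmt10_general {ι : Type*} [CompleteSpace H] {e : ℕ → H}
    (he : Orthonormal 𝕜 fun n : ℕ => e (n + 1)) {p : ℝ} (hp : 0 < p) (hp2 : p ≤ 2)
    {𝒜 : ℝ → H → H}
    (h𝒜 : ∀ n : ℕ, 1 ≤ n → ∀ t ∈ Ico (1 / ((n : ℝ) + 1)) (1 / (n : ℝ)), ∀ h : H,
      𝒜 t h = (n : 𝕜) • ((inner 𝕜 (e 1) h : 𝕜) • e n))
    {f g : ι → H} (hf : ∀ h : H, Summable fun m => ‖inner 𝕜 h (f m)‖ ^ (2 : ℝ))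
    (hg : Summable fun m => ‖g m‖ ^ p) :
    ∫⁻ t in Ico (0 : ℝ) 1, ∑' m, ‖inner 𝕜 (g m) (𝒜 t (f m))‖ₑ ≤
      ENNReal.ofReal (√(Real.pi ^ 2 / 6 - 1) *
        (weakNorm 𝕜 2 f * (∑' m, ‖g m‖ ^ p) ^ (1 / p))) := by
  have norm_e_one : ‖e 1‖ ≤ 1 := (he.1 0).le
  rw [setLIntegral_tsum_enorm_inner_eq h𝒜]
  refine (tsum_mul_tsum_mul_enorm_inner_le he hp hp2 _ _ g).trans ?_
  rw [rpow_tsum_enorm_one_div_add_two, rpow_tsum_enorm_rpow_eq_ofReal zero_le_two (hf (e 1)),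
    rpow_tsum_enorm_rpow_eq_ofReal hp.le hg, ← ENNReal.ofReal_mul (by positivity),
    ← ENNReal.ofReal_mul (by positivity)]
  gcongr
  exact rpow_tsum_norm_inner_rpow_le_weakNorm one_le_two hf norm_e_one

end RankOneSteps

/-- for the operator-valued function `𝒜` on `[0,1)` given by
`𝒜_t h = n ⟨h, e_1⟩ e_n` on `[1/(n+1), 1/n)` (with `(e_n)_{n ≥ 1}` an orthonormal
basis of a separable Hilbert space `H`), and `q ≥ 2`, one has for every weakly
`2`-summable `(f_m)` and `q'`-summable `(g_m)` in `H`: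
`∫_{[0,1)} ∑_m |⟨𝒜_t f_m, g_m⟩| dt ≤ M ‖(f_m)‖_{2,w} ‖(g_m)‖_{q'} < ∞`,
where `M = √(π²/6 − 1) = √(∑_{n ≥ 1} 1/(n+1)²)`. -/
theorem stmt10 (H : Type*) [NormedAddCommGroup H] [InnerProductSpace ℂ H]
    [CompleteSpace H]
    (e : ℕ → H) (he : Orthonormal ℂ (fun n : ℕ => e (n + 1)))
    (hsp : (Submodule.span ℂ (Set.range (fun n : ℕ => e (n + 1)))).topologicalClosure = ⊤)
    (q : ℝ) (hq : 2 ≤ q)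
    (𝒜 : ℝ → (H →L[ℂ] H))
    (h𝒜 : ∀ n : ℕ, 1 ≤ n →
      ∀ t ∈ Set.Ico (1 / ((n : ℝ) + 1)) (1 / (n : ℝ)),
        ∀ h : H, 𝒜 t h = (n : ℂ) • ((inner ℂ (e 1) h : ℂ) • e n))
    (h0 : 𝒜 0 = 0) :
    Real.sqrt (Real.pi ^ 2 / 6 - 1) = Real.sqrt (∑' n : ℕ, 1 / ((n : ℝ) + 2) ^ 2) ∧
    ∀ (f g : ℕ → H),
      (∀ h : H, Summable fun m => ‖(inner ℂ h (f m) : ℂ)‖ ^ (2 : ℝ)) →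
      (Summable fun m => ‖g m‖ ^ (q / (q - 1))) →
      ∫⁻ t in Set.Ico (0 : ℝ) 1, ∑' m, (‖(inner ℂ (g m) (𝒜 t (f m)) : ℂ)‖₊ : ℝ≥0∞) ≤
        ENNReal.ofReal (Real.sqrt (Real.pi ^ 2 / 6 - 1) *
          ((⨆ h : {h : H // ‖h‖ ≤ 1},
              (∑' m, ‖(inner ℂ (h : H) (f m) : ℂ)‖ ^ (2 : ℝ)) ^ ((1 : ℝ) / 2)) *
            (∑' m, ‖g m‖ ^ (q / (q - 1))) ^ ((q - 1) / q))) := by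
  have hq1 : 0 < q - 1 := by linarith
  have conj_le_two : q / (q - 1) ≤ 2 := (div_le_iff₀ hq1).2 (by linarith)
  refine ⟨by rw [hasSum_one_div_add_two_sq.tsum_eq], fun f g hf hg => ?_⟩
  rw [← one_div_div q (q - 1)]
  exact stmt10_general he (by positivity) conj_le_two h𝒜 hf hg
end

section
/- Let H be an infinite-dimensional separable complex Hilbert space, and let (x_n)_{n=1}^∞ be a sequence in H with ‖(x_n)‖_{2,w} ≤ 1, i.e. ∑_{n=1}^∞ |⟨x_n, h⟩|² ≤ ‖h‖² for every h ∈ H. Then there exist orthonormal bases (f_n)_{n=1}^∞, (g_n)_{n=1}^∞ and (h_n)_{n=1}^∞ of H such that x_n = f_n + g_n + h_n for every n. -/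
open MeasureTheory
open scoped InnerProductSpace InnerProduct lp NNReal

/-!
A sequence of weak `ℓ²` norm at most `1` is the image of any orthonormal basis under a contraction
`T`, and unitaries send orthonormal bases to orthonormal bases, so it suffices to write `T` as a sum
of three unitaries. Put `S = T - 1`. Since a contraction and its adjoint have the same fixed
vectors, `ker S = ker S†`, so the polar decomposition `S = W |S|` can be chosen with `W` unitary.
As `‖S‖ ≤ 2`, the operator `|S| / 2` is a self-adjoint contraction, hence the real part of the
unitary `u = |S| / 2 + i √(1 - |S|² / 4)`, and `T = W u + W u† + 1`.
-/

lemma exists_unitary_add_star_eq_of_norm_le_two {A : Type*} [CStarAlgebra A] [PartialOrder A]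
    [StarOrderedRing A] {a : A} (ha : IsSelfAdjoint a) (hnorm : ‖a‖ ≤ 2) :
    ∃ u : unitary A, (u : A) + star (u : A) = a := by
  let c : selfAdjoint A := (2⁻¹ : ℝ) • ⟨a, ha⟩
  have hc : ‖c‖ ≤ 1 := by
    change ‖(2⁻¹ : ℝ) • a‖ ≤ 1
    rw [norm_smul, Real.norm_of_nonneg (by norm_num)]
    linarith
  have htwo : (2⁻¹ : ℝ) ≠ 0 := by norm_num
  refine ⟨selfAdjoint.unitarySelfAddISMul c hc, smul_right_injective A htwo ?_⟩
  have hre := selfAdjoint.realPart_unitarySelfAddISMul c hc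
  exact (realPart_apply_coe _).symm.trans (congrArg Subtype.val hre)

section Operators

variable {𝕜 E F : Type*} [RCLike 𝕜] [NormedAddCommGroup F] [InnerProductSpace 𝕜 F]

section Extension

variable [AddCommGroup E] [Module 𝕜 E] {K : Submodule 𝕜 F} {R S : E →ₗ[𝕜] F}

lemma denseRange_coprod_subtype_of_orthogonal_range_eq [CompleteSpace F] (hK : R.rangeᗮ = K) :
    DenseRange (R.coprod K.subtype) := by
  rw [DenseRange, ← LinearMap.coe_range, Submodule.dense_iff_topologicalClosure_eq_top,
    Submodule.topologicalClosure_eq_top_iff, LinearMap.range_coprod, Submodule.range_subtype,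
    ← Submodule.inf_orthogonal, hK, Submodule.inf_orthogonal_eq_bot]

lemma norm_sq_coprod_subtype_of_orthogonal_range_eq (hK : R.rangeᗮ = K) (z : E × K) :
    ‖R.coprod K.subtype z‖ ^ 2 = ‖R z.1‖ ^ 2 + ‖z.2‖ ^ 2 := by
  have hort : ⟪R z.1, (z.2 : F)⟫_𝕜 = 0 :=
    Submodule.inner_right_of_mem_orthogonal (LinearMap.mem_range_self R z.1) (hK ▸ z.2.2)
  simpa [sq] using norm_add_sq_eq_norm_sq_add_norm_sq_of_inner_eq_zero _ _ hort

-- `W` extends `R v ↦ S v` by the identity on the common orthogonal complement of the ranges.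
lemma exists_linearIsometryEquiv_apply_eq_of_norm_eq [CompleteSpace F]
    (hnorm : ∀ v, ‖R v‖ = ‖S v‖) (hrange : R.rangeᗮ = S.rangeᗮ) :
    ∃ W : F ≃ₗᵢ[𝕜] F, ∀ v, W (R v) = S v := by
  have hRdense := denseRange_coprod_subtype_of_orthogonal_range_eq hrange
  have hSdense := denseRange_coprod_subtype_of_orthogonal_range_eq (R := S) rfl
  have hisom (z : E × S.rangeᗮ) : ‖S.coprod S.rangeᗮ.subtype (LinearEquiv.refl 𝕜 _ z)‖ =
      ‖R.coprod S.rangeᗮ.subtype z‖ := by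
    rw [← sq_eq_sq₀ (norm_nonneg _) (norm_nonneg _), LinearEquiv.refl_apply,
      norm_sq_coprod_subtype_of_orthogonal_range_eq rfl,
      norm_sq_coprod_subtype_of_orthogonal_range_eq hrange, hnorm]
  refine ⟨(LinearEquiv.refl 𝕜 _).extendOfIsometry _ _ hRdense hSdense hisom, fun v ↦ ?_⟩
  simpa using LinearEquiv.extendOfIsometry_eq _ _ _ hRdense hSdense hisom (v, 0)

end Extension

variable [CompleteSpace F]

lemma adjoint_apply_eq_self_of_norm_le_one {T : F →L[𝕜] F} (hT : ‖T‖ ≤ 1) {v : F} (hv : T v = v) :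
    (T†) v = v := by
  refine eq_of_norm_le_re_inner_eq_norm_sq (𝕜 := 𝕜) ?_ ?_
  · simpa using T†.le_of_opNorm_le (by simpa using hT : ‖T†‖ ≤ 1) v
  · rw [ContinuousLinearMap.adjoint_inner_left, hv, inner_self_eq_norm_sq]

lemma ker_adjoint_sub_one_of_norm_le_one {T : F →L[𝕜] F} (hT : ‖T‖ ≤ 1) :
    ((T - 1)†).ker = (T - 1).ker := by
  have hT' : ‖T†‖ ≤ 1 := by simpa using hT
  have hone : (1 : F →L[𝕜] F)† = 1 := star_one _
  ext v
  simp only [map_sub, hone, LinearMap.mem_ker, ContinuousLinearMap.coe_coe,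
    sub_apply, one_apply_eq_self, sub_eq_zero]
  exact ⟨fun h ↦ by simpa using adjoint_apply_eq_self_of_norm_le_one hT' h,
    adjoint_apply_eq_self_of_norm_le_one hT⟩

end Operators

section SumOfUnitaries

variable {H : Type*} [NormedAddCommGroup H] [InnerProductSpace ℂ H] [CompleteSpace H]

lemma norm_cfcAbs_apply (S : H →L[ℂ] H) (v : H) : ‖CFC.abs S v‖ = ‖S v‖ := by
  have hadj : (CFC.abs S)† = CFC.abs S := (CFC.abs_nonneg S).isSelfAdjoint.adjoint_eq
  have habs : (CFC.abs S)† ∘L CFC.abs S = S† ∘L S := by rw [hadj]; exact CFC.abs_mul_abs S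
  rw [ContinuousLinearMap.apply_norm_eq_sqrt_inner_adjoint_left, habs,
    ← ContinuousLinearMap.apply_norm_eq_sqrt_inner_adjoint_left]

lemma exists_unitary_mul_cfcAbs_eq_of_ker_adjoint_eq {S : H →L[ℂ] H} (hS : (S†).ker = S.ker) :
    ∃ W : unitary (H →L[ℂ] H), W * CFC.abs S = S := by
  have hker : (CFC.abs S).ker = S.ker := by
    ext v
    simp [← norm_eq_zero (a := CFC.abs S v), norm_cfcAbs_apply]
  have hnormal : IsStarNormal (CFC.abs S) := (CFC.abs_nonneg S).isSelfAdjoint.isStarNormal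
  have hrange : (CFC.abs S).rangeᗮ = S.rangeᗮ := by
    rw [ContinuousLinearMap.IsStarNormal.orthogonal_range hnormal, hker, ← hS, S.orthogonal_range]
  obtain ⟨W, hW⟩ := exists_linearIsometryEquiv_apply_eq_of_norm_eq (norm_cfcAbs_apply S) hrange
  exact ⟨Unitary.linearIsometryEquiv.symm W, ContinuousLinearMap.ext hW⟩

lemma exists_unitary_add_eq_of_ker_adjoint_eq {S : H →L[ℂ] H} (hS : (S†).ker = S.ker)
    (hnorm : ‖S‖ ≤ 2) :
    ∃ U V : unitary (H →L[ℂ] H), (U + V : H →L[ℂ] H) = S := by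
  obtain ⟨W, hW⟩ := exists_unitary_mul_cfcAbs_eq_of_ker_adjoint_eq hS
  obtain ⟨u, hu⟩ := exists_unitary_add_star_eq_of_norm_le_two (CFC.abs_nonneg S).isSelfAdjoint
    (CFC.norm_abs.trans_le hnorm)
  exact ⟨W * u, W * star u, by simp [← mul_add, hu, hW]⟩

theorem exists_unitary_add_add_eq_of_norm_le_one {T : H →L[ℂ] H} (hT : ‖T‖ ≤ 1) :
    ∃ U V W : unitary (H →L[ℂ] H), (U + V + W : H →L[ℂ] H) = T := by
  have hnorm : ‖T - 1‖ ≤ 2 := calc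
    ‖T - 1‖ ≤ ‖T‖ + ‖(1 : H →L[ℂ] H)‖ := norm_sub_le _ _
    _ ≤ 1 + 1 := add_le_add hT ContinuousLinearMap.norm_id_le
    _ = 2 := one_add_one_eq_two
  have hker := ker_adjoint_sub_one_of_norm_le_one hT
  obtain ⟨U, V, h⟩ := exists_unitary_add_eq_of_ker_adjoint_eq hker hnorm
  exact ⟨U, V, 1, by simp [h]⟩

end SumOfUnitaries

section HilbertBases

variable {ι 𝕜 H : Type*} [RCLike 𝕜] [NormedAddCommGroup H] [InnerProductSpace 𝕜 H]

lemma countable_of_orthonormal [TopologicalSpace.SeparableSpace H] {v : ι → H}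
    (hv : Orthonormal 𝕜 v) : Countable ι := by
  have hdist : Pairwise fun i j ↦ Disjoint (Metric.ball (v i) 2⁻¹) (Metric.ball (v j) 2⁻¹) := by
    intro i j hij
    have hsq : ‖v i - v j‖ ^ 2 = 2 := by
      rw [norm_sub_sq (𝕜 := 𝕜), hv.2 hij, hv.1, hv.1]
      norm_num
    refine Metric.ball_disjoint_ball ?_
    rw [dist_eq_norm]
    nlinarith [norm_nonneg (v i - v j)]
  exact hdist.countable_of_isOpen_disjoint (fun _ ↦ Metric.isOpen_ball)
    fun _ ↦ Metric.nonempty_ball.2 (by norm_num)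

lemma infinite_of_hilbertBasis (b : HilbertBasis ι 𝕜 H) (hinf : ¬ FiniteDimensional 𝕜 H) :
    Infinite ι := by
  refine not_finite_iff_infinite.1 fun _ ↦ hinf ?_
  have := Fintype.ofFinite ι
  exact b.toOrthonormalBasis.toBasis.finiteDimensional_of_finite

lemma nonempty_hilbertBasis_nat [CompleteSpace H] [TopologicalSpace.SeparableSpace H]
    (hinf : ¬ FiniteDimensional 𝕜 H) : Nonempty (HilbertBasis ℕ 𝕜 H) := by
  obtain ⟨w, b, -⟩ := exists_hilbertBasis 𝕜 H
  have := countable_of_orthonormal b.orthonormal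
  have := infinite_of_hilbertBasis b hinf
  obtain ⟨e⟩ := nonempty_equiv_of_countable (α := ℕ) (β := w)
  exact ⟨.mk (b.orthonormal.comp e e.injective) (by rw [e.surjective.range_comp, b.dense_span])⟩

variable {H' : Type*} [NormedAddCommGroup H'] [InnerProductSpace 𝕜 H']

/-- The Hilbert basis `i ↦ U (b i)`, the image of `b` under the unitary `U`. -/
noncomputable def mapHilbertBasis (b : HilbertBasis ι 𝕜 H) (U : H ≃ₗᵢ[𝕜] H') :
    HilbertBasis ι 𝕜 H' :=
  .ofRepr (U.symm.trans b.repr)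

lemma mapHilbertBasis_apply (b : HilbertBasis ι 𝕜 H) (U : H ≃ₗᵢ[𝕜] H') (i : ι) :
    mapHilbertBasis b U i = U (b i) := rfl

end HilbertBases

/-- The family `x` has weak `ℓ²` norm `‖x‖_{2,w}` at most `C`. Bounding finite partial sums states
both the convergence of the series `∑ |⟨x i, h⟩|²` and the bound on its sum. -/
def IsBessel (𝕜 : Type*) {ι H : Type*} [RCLike 𝕜] [NormedAddCommGroup H]
    [InnerProductSpace 𝕜 H] (C : ℝ≥0) (x : ι → H) : Prop :=
  ∀ (h : H) (s : Finset ι), ∑ i ∈ s, ‖⟪x i, h⟫_𝕜‖ ^ 2 ≤ (C * ‖h‖) ^ 2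

namespace IsBessel

variable {ι 𝕜 H : Type*} [RCLike 𝕜] [NormedAddCommGroup H] [InnerProductSpace 𝕜 H]
  {C : ℝ≥0} {x : ι → H}

/-- The analysis operator `h ↦ (⟨x i, h⟩)ᵢ` of a Bessel family; its adjoint maps the standard basis
of `ℓ²` to `x`. -/
noncomputable def analysis (hx : IsBessel 𝕜 C x) : H →L[𝕜] ℓ²(ι, 𝕜) :=
  LinearMap.mkContinuous
    { toFun h := ⟨fun i ↦ ⟪x i, h⟫_𝕜, memℓp_gen' (by simpa using hx h)⟩
      map_add' u v := by ext i; exact inner_add_right _ _ _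
      map_smul' c u := by ext i; exact inner_smul_right _ _ _ }
    C fun h ↦ lp.norm_le_of_forall_sum_le (by simp) (by positivity) (by simpa using hx h)

lemma analysis_apply (hx : IsBessel 𝕜 C x) (h : H) (i : ι) : hx.analysis h i = ⟪x i, h⟫_𝕜 := rfl

lemma norm_analysis_le (hx : IsBessel 𝕜 C x) : ‖hx.analysis‖ ≤ C :=
  LinearMap.mkContinuous_norm_le _ C.2 _

lemma adjoint_analysis_single [CompleteSpace H] [DecidableEq ι] (hx : IsBessel 𝕜 C x) (i : ι) :
    (hx.analysis†) (lp.single 2 i 1) = x i := by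
  refine ext_inner_right 𝕜 fun h ↦ ?_
  rw [ContinuousLinearMap.adjoint_inner_left, lp.inner_single_left, analysis_apply,
    RCLike.inner_apply, map_one, mul_one]

lemma exists_clm_norm_le_apply_eq {E : Type*} [NormedAddCommGroup E] [InnerProductSpace 𝕜 E]
    [CompleteSpace H] (hx : IsBessel 𝕜 C x) (b : HilbertBasis ι 𝕜 E) :
    ∃ T : E →L[𝕜] H, ‖T‖ ≤ C ∧ ∀ i, T (b i) = x i := by
  classical
  refine ⟨hx.analysis† ∘L b.repr, ?_, fun i ↦ ?_⟩
  · rw [ContinuousLinearMap.opNorm_comp_linearIsometryEquiv, LinearIsometryEquiv.norm_map]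
    exact hx.norm_analysis_le
  · rw [ContinuousLinearMap.comp_apply, ContinuousLinearEquiv.coe_coe,
      LinearIsometryEquiv.coe_toContinuousLinearEquiv, b.repr_self, hx.adjoint_analysis_single]

end IsBessel

theorem stmt12_general {ι H : Type*} [NormedAddCommGroup H] [InnerProductSpace ℂ H]
    [CompleteSpace H] (b : HilbertBasis ι ℂ H) {x : ι → H} (hx : IsBessel ℂ 1 x) :
    ∃ f g k : HilbertBasis ι ℂ H, ∀ i, x i = f i + g i + k i := by
  obtain ⟨T, hT, hTb⟩ := hx.exists_clm_norm_le_apply_eq b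
  obtain ⟨U, V, W, rfl⟩ := exists_unitary_add_add_eq_of_norm_le_one hT
  let image (Q : unitary (H →L[ℂ] H)) := mapHilbertBasis b (Unitary.linearIsometryEquiv Q)
  have himage (Q : unitary (H →L[ℂ] H)) (i : ι) : image Q i = (Q : H →L[ℂ] H) (b i) :=
    mapHilbertBasis_apply _ _ i
  exact ⟨image U, image V, image W, fun i ↦ by simp [himage, ← hTb]⟩

/-- in an infinite-dimensional separable complex Hilbert space, every
sequence `(x_n)` with weak-`ℓ²` norm at most `1` (i.e. `∑_n |⟨x_n, h⟩|² ≤ ‖h‖²` for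
all `h`) is the sum of three orthonormal bases: `x_n = f_n + g_n + h_n`. -/
theorem stmt12 (H : Type*) [NormedAddCommGroup H] [InnerProductSpace ℂ H]
    [CompleteSpace H] [TopologicalSpace.SeparableSpace H]
    (hinf : ¬ FiniteDimensional ℂ H)
    (x : ℕ → H)
    (hsum : ∀ h : H, Summable fun n => ‖(inner ℂ (x n) h : ℂ)‖ ^ (2 : ℝ))
    (hle : ∀ h : H, (∑' n, ‖(inner ℂ (x n) h : ℂ)‖ ^ (2 : ℝ)) ≤ ‖h‖ ^ (2 : ℝ)) :
    ∃ f g k : ℕ → H,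
      Orthonormal ℂ f ∧ (Submodule.span ℂ (Set.range f)).topologicalClosure = ⊤ ∧
      Orthonormal ℂ g ∧ (Submodule.span ℂ (Set.range g)).topologicalClosure = ⊤ ∧
      Orthonormal ℂ k ∧ (Submodule.span ℂ (Set.range k)).topologicalClosure = ⊤ ∧
      ∀ n, x n = f n + g n + k n := by
  have hx : IsBessel ℂ 1 x := fun h s ↦ by
    simpa using ((hsum h).sum_le_tsum s fun _ _ ↦ by positivity).trans (hle h)
  obtain ⟨b⟩ := nonempty_hilbertBasis_nat hinf
  obtain ⟨f, g, k, hfgk⟩ := stmt12_general b hx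
  exact ⟨f, g, k, f.orthonormal, f.dense_span, g.orthonormal, g.dense_span, k.orthonormal,
    k.dense_span, hfgk⟩
end

section
/- Let H be an infinite-dimensional separable complex Hilbert space, (Ω, 𝔐, μ) a measure space, φ and Φ as in the context, and 𝒜 : Ω → B(H) such that t ↦ ⟨𝒜_t x, y⟩ is measurable for all x, y ∈ H, such that for μ-almost every t one has Φ((⟨𝒜_t e_n, f_n⟩)_{n=1}^∞) < +∞ for every pair of orthonormal sequences (e_n), (f_n) in H, and such that for every pair of orthonormal sequences (e_n)_{n=1}^∞ and (f_n)_{n=1}^∞ in H one has ∫_Ω Φ((⟨𝒜_t e_n, f_n⟩)_{n=1}^∞) dμ(t) < +∞. Then sup { ∫_Ω Φ((⟨𝒜_t e_n, f_n⟩)_{n=1}^∞) dμ(t) : (e_n), (f_n) orthonormal sequences in H } < +∞. -/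
open MeasureTheory ENNReal

/-- The extension `Φ` of a norm `φ` on finitely supported sequences to arbitrary
complex sequences: `Φ((a_n)) = sup_N φ(a_0, …, a_{N-1}, 0, 0, …) ∈ [0, ∞]`. -/
noncomputable def Phi (φ : (ℕ →₀ ℂ) → ℝ) (a : ℕ → ℂ) : ℝ≥0∞ :=
  ⨆ N : ℕ, ENNReal.ofReal (φ (∑ n ∈ Finset.range N, Finsupp.single n (a n)))

/-!
Fix orthonormal sequences `b` and `c`. All orthonormal sequences are parametrized by the unit ball
of a single Banach space: each is of the form `n ↦ S (b n)` for some partial isometry `S`. The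
integral thus becomes a function `F S T` of two bounded operators which is a seminorm in each
variable, possibly infinite, and lower semicontinuous by Fatou's lemma. Unitary operators preserve
orthonormality, so `F` is finite on pairs of unitaries; since unitaries span the bounded operators,
`F` is finite everywhere. Two applications of the uniform boundedness principle, one per variable,
bound `F` on the product of the unit balls.
-/

open Filter
open scoped NNReal

theorem enorm_le_one_iff_norm_le_one {E : Type*} [SeminormedAddGroup E] {x : E} :
    ‖x‖ₑ ≤ 1 ↔ ‖x‖ ≤ 1 := by
  rw [← ofReal_norm, ENNReal.ofReal_le_one]

/-- A `[0, ∞]`-valued seminorm: subadditive and absolutely homogeneous, with the value `∞` allowed,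
so that suprema and integrals of such functions stay in the class. Mathlib's `Seminorm` is
real-valued. -/
structure IsExtendedSeminorm (𝕜 : Type*) {V : Type*} [NormedField 𝕜] [AddCommGroup V] [Module 𝕜 V]
    (G : V → ℝ≥0∞) : Prop where
  add_le : ∀ x y, G (x + y) ≤ G x + G y
  smul : ∀ (c : 𝕜) (x : V), G (c • x) = ‖c‖ₑ * G x

namespace IsExtendedSeminorm

section Algebra

variable {𝕜 𝕜' V W Ω ι : Type*} [NormedField 𝕜] [NormedField 𝕜'] [AddCommGroup V] [Module 𝕜 V]
  [AddCommGroup W] [Module 𝕜' W]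

theorem ofReal_seminorm (p : Seminorm 𝕜 V) :
    IsExtendedSeminorm 𝕜 fun x => ENNReal.ofReal (p x) where
  add_le x y := by
    rw [← ENNReal.ofReal_add (apply_nonneg p x) (apply_nonneg p y)]
    exact ENNReal.ofReal_le_ofReal (map_add_le_add p x y)
  smul c x := by
    rw [map_smul_eq_mul, ENNReal.ofReal_mul (norm_nonneg c), ofReal_norm]

protected theorem iSup {G : ι → V → ℝ≥0∞} (hG : ∀ i, IsExtendedSeminorm 𝕜 (G i)) :
    IsExtendedSeminorm 𝕜 fun x => ⨆ i, G i x where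
  add_le x y := iSup_le fun i => ((hG i).add_le x y).trans <|
    add_le_add (le_iSup (fun i => G i x) i) (le_iSup (fun i => G i y) i)
  smul c x := by simp only [(hG _).smul, ENNReal.mul_iSup]

protected theorem lintegral [MeasurableSpace Ω] (μ : Measure Ω) {G : Ω → V → ℝ≥0∞}
    (hG : ∀ t, IsExtendedSeminorm 𝕜 (G t)) (hmeas : ∀ x, Measurable fun t => G t x) :
    IsExtendedSeminorm 𝕜 fun x => ∫⁻ t, G t x ∂μ where
  add_le x y := by
    rw [← lintegral_add_left (hmeas x)]
    exact lintegral_mono fun t => (hG t).add_le x y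
  smul c x := by simp only [(hG _).smul, lintegral_const_mul _ (hmeas x)]

theorem comp {G : W → ℝ≥0∞} (hG : IsExtendedSeminorm 𝕜' G) {σ : 𝕜 →+* 𝕜'} [RingHomIsometric σ]
    (L : V →ₛₗ[σ] W) : IsExtendedSeminorm 𝕜 fun x => G (L x) where
  add_le x y := by simpa only [map_add] using hG.add_le (L x) (L y)
  smul c x := by
    rw [map_smulₛₗ, hG.smul, ← ofReal_norm, RingHomIsometric.norm_map, ofReal_norm]

theorem lt_top_of_mem_span {G : V → ℝ≥0∞} (hG : IsExtendedSeminorm 𝕜 G) {s : Set V}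
    (hs : ∀ x ∈ s, G x < ⊤) {x : V} (hx : x ∈ Submodule.span 𝕜 s) : G x < ⊤ := by
  induction hx using Submodule.span_induction with
  | mem x hx => exact hs x hx
  | zero =>
    have hzero : G 0 = 0 := by simpa using hG.smul 0 0
    exact hzero ▸ ENNReal.zero_lt_top
  | add x y _ _ hx hy => exact (hG.add_le x y).trans_lt (ENNReal.add_lt_top.2 ⟨hx, hy⟩)
  | smul c x _ hx => exact hG.smul c x ▸ ENNReal.mul_lt_top enorm_lt_top hx

/-- The real-valued seminorm given by an everywhere finite extended seminorm. -/
noncomputable def toSeminorm {G : V → ℝ≥0∞} (hG : IsExtendedSeminorm 𝕜 G) (hfin : ∀ x, G x < ⊤) :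
    Seminorm 𝕜 V :=
  Seminorm.of (fun x => (G x).toReal)
    (fun x y => (ENNReal.toReal_mono (ENNReal.add_lt_top.2 ⟨hfin x, hfin y⟩).ne
      (hG.add_le x y)).trans ENNReal.toReal_add_le)
    (fun c x => by rw [hG.smul, ENNReal.toReal_mul, toReal_enorm])

theorem ofReal_toSeminorm {G : V → ℝ≥0∞} (hG : IsExtendedSeminorm 𝕜 G) (hfin : ∀ x, G x < ⊤)
    (x : V) : ENNReal.ofReal (hG.toSeminorm hfin x) = G x :=
  ENNReal.ofReal_toReal (hfin x).ne

theorem lowerSemicontinuous_toSeminorm [TopologicalSpace V] {G : V → ℝ≥0∞}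
    (hG : IsExtendedSeminorm 𝕜 G) (hfin : ∀ x, G x < ⊤) (hlsc : LowerSemicontinuous G) :
    LowerSemicontinuous (hG.toSeminorm hfin) := by
  intro x r hr
  obtain hneg | hnonneg := lt_or_ge r 0
  · exact Eventually.of_forall fun y => hneg.trans_le (apply_nonneg _ y)
  · have lt_iff (y : V) : r < hG.toSeminorm hfin y ↔ ENNReal.ofReal r < G y :=
      (ENNReal.ofReal_lt_iff_lt_toReal hnonneg (hfin y).ne).symm
    simp only [lt_iff] at hr ⊢
    exact hlsc x _ hr

end Algebra

section UniformBoundedness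

variable {𝕜 𝕜' V W ι : Type*} [NontriviallyNormedField 𝕜] [NontriviallyNormedField 𝕜']
  [SeminormedAddCommGroup V] [NormedSpace 𝕜 V] [BarrelledSpace 𝕜 V]
  [SeminormedAddCommGroup W] [NormedSpace 𝕜' W] [BarrelledSpace 𝕜' W]

theorem exists_le_mul_enorm {G : V → ℝ≥0∞} (hG : IsExtendedSeminorm 𝕜 G)
    (hlsc : LowerSemicontinuous G) (hfin : ∀ x, G x < ⊤) :
    ∃ C : ℝ≥0, ∀ x, G x ≤ C * ‖x‖ₑ := by
  obtain ⟨C, hC, hbound⟩ := (hG.toSeminorm hfin).bound_of_continuous_normedSpace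
    ((hG.toSeminorm hfin).continuous_of_lowerSemicontinuous
      (hG.lowerSemicontinuous_toSeminorm hfin hlsc))
  refine ⟨C.toNNReal, fun x => ?_⟩
  calc G x = ENNReal.ofReal (hG.toSeminorm hfin x) := (hG.ofReal_toSeminorm hfin x).symm
    _ ≤ ENNReal.ofReal (C * ‖x‖) := ENNReal.ofReal_le_ofReal (hbound x)
    _ = C.toNNReal * ‖x‖ₑ := by rw [ENNReal.ofReal_mul hC.le, ofReal_norm]; rfl

theorem banach_steinhaus {G : ι → V → ℝ≥0∞} (hG : ∀ i, IsExtendedSeminorm 𝕜 (G i))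
    (hlsc : ∀ i, LowerSemicontinuous (G i)) (hbdd : ∀ x, ⨆ i, G i x < ⊤) :
    ∃ C : ℝ≥0, ∀ i x, G i x ≤ C * ‖x‖ₑ := by
  obtain ⟨C, hC⟩ := (IsExtendedSeminorm.iSup hG).exists_le_mul_enorm
    (lowerSemicontinuous_iSup hlsc) hbdd
  exact ⟨C, fun i x => (le_iSup (fun i => G i x) i).trans (hC x)⟩

theorem exists_le_of_separately {F : V → W → ℝ≥0∞}
    (hleft : ∀ y, IsExtendedSeminorm 𝕜 fun x => F x y)
    (hright : ∀ x, IsExtendedSeminorm 𝕜' (F x))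
    (hlsc_left : ∀ y, LowerSemicontinuous fun x => F x y)
    (hlsc_right : ∀ x, LowerSemicontinuous (F x)) (hfin : ∀ x y, F x y < ⊤) :
    ∃ C : ℝ≥0, ∀ x y, ‖x‖ ≤ 1 → ‖y‖ ≤ 1 → F x y ≤ C := by
  have hbdd (y : W) : ⨆ x : {x : V // ‖x‖ ≤ 1}, F x y < ⊤ := by
    obtain ⟨C, hC⟩ := (hleft y).exists_le_mul_enorm (hlsc_left y) (hfin · y)
    refine (iSup_le fun x => ?_).trans_lt (ENNReal.coe_lt_top (r := C))
    exact (hC x).trans (mul_le_of_le_one_right' (enorm_le_one_iff_norm_le_one.2 x.2))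
  obtain ⟨C, hC⟩ := banach_steinhaus (G := fun x : {x : V // ‖x‖ ≤ 1} => F x)
    (fun x => hright x) (fun x => hlsc_right x) hbdd
  exact ⟨C, fun x y hx hy => (hC ⟨x, hx⟩ y).trans
    (mul_le_of_le_one_right' (enorm_le_one_iff_norm_le_one.2 hy))⟩

end UniformBoundedness

theorem exists_le_of_lt_top_on_unitary {A B : Type*} [CStarAlgebra A] [CStarAlgebra B]
    {F : A → B → ℝ≥0∞} (hleft : ∀ y, IsExtendedSeminorm ℂ fun x => F x y)
    (hright : ∀ x, IsExtendedSeminorm ℂ (F x))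
    (hlsc_left : ∀ y, LowerSemicontinuous fun x => F x y)
    (hlsc_right : ∀ x, LowerSemicontinuous (F x))
    (hunitary : ∀ u ∈ unitary A, ∀ v ∈ unitary B, F u v < ⊤) :
    ∃ C : ℝ≥0, ∀ x y, ‖x‖ ≤ 1 → ‖y‖ ≤ 1 → F x y ≤ C := by
  have hfin_right (u : A) (hu : u ∈ unitary A) (y : B) : F u y < ⊤ :=
    (hright u).lt_top_of_mem_span (hunitary u hu) (CStarAlgebra.span_unitary B ▸ trivial)
  have hfin (x : A) (y : B) : F x y < ⊤ :=
    (hleft y).lt_top_of_mem_span (fun u hu => hfin_right u hu y)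
      (CStarAlgebra.span_unitary A ▸ trivial)
  exact exists_le_of_separately hleft hright hlsc_left hlsc_right hfin

end IsExtendedSeminorm

section Phi

/-- The linear map keeping the first `N` terms of a sequence; `Phi p` is the supremum over `N` of
the seminorms `p ∘ truncation N`. -/
noncomputable def truncation (N : ℕ) : (ℕ → ℂ) →ₗ[ℂ] (ℕ →₀ ℂ) :=
  ∑ n ∈ Finset.range N, Finsupp.lsingle n ∘ₗ LinearMap.proj n

theorem continuous_seminorm_comp_truncation (p : Seminorm ℂ (ℕ →₀ ℂ)) (N : ℕ) :
    Continuous (p.comp (truncation N)) := by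
  refine Finset.sum_induction _ (fun L : (ℕ → ℂ) →ₗ[ℂ] (ℕ →₀ ℂ) => Continuous (p.comp L))
    (fun L L' hL hL' => ?_) ?_ fun n _ => ?_
  · exact Seminorm.continuous_of_le (hL.add hL') (p.comp_add_le L L')
  · rw [Seminorm.comp_zero]
    exact continuous_const
  · have hcoord (a : ℕ → ℂ) : p (Finsupp.single n (a n)) = ‖a n‖ * p (Finsupp.single n 1) := by
      rw [← map_smul_eq_mul, Finsupp.smul_single_one]
    change Continuous fun a : ℕ → ℂ => p (Finsupp.single n (a n))
    simp only [hcoord]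
    fun_prop

theorem Phi_seminorm_eq_iSup (p : Seminorm ℂ (ℕ →₀ ℂ)) :
    Phi p = fun a => ⨆ N, ENNReal.ofReal (p.comp (truncation N) a) := by
  ext a
  simp [Phi, truncation]

theorem isExtendedSeminorm_Phi (p : Seminorm ℂ (ℕ →₀ ℂ)) : IsExtendedSeminorm ℂ (Phi p) := by
  rw [Phi_seminorm_eq_iSup]
  exact .iSup fun N => .ofReal_seminorm (p.comp (truncation N))

theorem lowerSemicontinuous_Phi (p : Seminorm ℂ (ℕ →₀ ℂ)) : LowerSemicontinuous (Phi p) := by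
  rw [Phi_seminorm_eq_iSup]
  exact lowerSemicontinuous_iSup fun N =>
    (ENNReal.continuous_ofReal.comp (continuous_seminorm_comp_truncation p N)).lowerSemicontinuous

end Phi

theorem lowerSemicontinuous_lintegral {X Ω : Type*} [TopologicalSpace X]
    [FirstCountableTopology X] [MeasurableSpace Ω] (μ : Measure Ω) {f : X → Ω → ℝ≥0∞}
    (hmeas : ∀ x, Measurable (f x)) (hlsc : ∀ t, LowerSemicontinuous fun x => f x t) :
    LowerSemicontinuous fun x => ∫⁻ t, f x t ∂μ :=
  lowerSemicontinuous_iff_le_liminf.2 fun x =>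
    (lintegral_mono fun t => (hlsc t).le_liminf x).trans (lintegral_liminf_le hmeas)

section Orthonormal

variable {𝕜 E F ι : Type*} [RCLike 𝕜] [NormedAddCommGroup E] [InnerProductSpace 𝕜 E]
  [CompleteSpace E] [NormedAddCommGroup F] [InnerProductSpace 𝕜 F] [CompleteSpace F]

theorem exists_linearIsometry_lp_single {e : ι → E} [DecidableEq ι] (he : Orthonormal 𝕜 e) :
    ∃ U : lp (fun _ : ι => 𝕜) 2 →ₗᵢ[𝕜] E, ∀ i, U (lp.single 2 i 1) = e i :=
  ⟨he.orthogonalFamily.linearIsometry, fun i => by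
    rw [OrthogonalFamily.linearIsometry_apply_single, LinearIsometry.toSpanSingleton_apply,
      one_smul]⟩

theorem exists_contraction_map_orthonormal {b : ι → E} {e : ι → F} (hb : Orthonormal 𝕜 b)
    (he : Orthonormal 𝕜 e) : ∃ S : E →L[𝕜] F, ‖S‖ ≤ 1 ∧ ∀ i, S (b i) = e i := by
  classical
  obtain ⟨U, hU⟩ := exists_linearIsometry_lp_single hb
  obtain ⟨V, hV⟩ := exists_linearIsometry_lp_single he
  have adjoint_map (v) : U.toContinuousLinearMap.adjoint (U v) = v :=
    DFunLike.congr_fun ((ContinuousLinearMap.norm_map_iff_adjoint_comp_self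
      U.toContinuousLinearMap).1 U.norm_map) v
  refine ⟨V.toContinuousLinearMap ∘L U.toContinuousLinearMap.adjoint, ?_, fun i => ?_⟩
  · calc ‖V.toContinuousLinearMap ∘L U.toContinuousLinearMap.adjoint‖
        ≤ ‖V.toContinuousLinearMap‖ * ‖U.toContinuousLinearMap.adjoint‖ :=
          ContinuousLinearMap.opNorm_comp_le _ _
      _ ≤ 1 := by
        rw [LinearIsometryEquiv.norm_map]
        exact mul_le_one₀ V.norm_toContinuousLinearMap_le (norm_nonneg _)
          U.norm_toContinuousLinearMap_le
  · rw [ContinuousLinearMap.comp_apply, ← hU i, adjoint_map, ← hV i]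
    rfl

end Orthonormal

section PhiIntegral

variable {H K Ω : Type*} [NormedAddCommGroup H] [InnerProductSpace ℂ H]
  [NormedAddCommGroup K] [InnerProductSpace ℂ K] [MeasurableSpace Ω] (μ : Measure Ω)
  (p : Seminorm ℂ (ℕ →₀ ℂ)) {𝒜 : Ω → H →L[ℂ] K}

/-- The integral `∫ Φ((⟨𝒜_t x_n, y_n⟩)_n) dμ(t)` as a function of arbitrary sequences `x` and `y`,
orthonormal or not, so that it becomes an extended seminorm in each variable. -/
noncomputable def phiIntegral (𝒜 : Ω → H →L[ℂ] K) (x : ℕ → H) (y : ℕ → K) : ℝ≥0∞ :=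
  ∫⁻ t, Phi p (fun n => inner ℂ (y n) (𝒜 t (x n))) ∂μ

theorem measurable_Phi_inner (hmeas : ∀ x y, Measurable fun t => inner ℂ y (𝒜 t x))
    (x : ℕ → H) (y : ℕ → K) :
    Measurable fun t => Phi p fun n => inner ℂ (y n) (𝒜 t (x n)) :=
  (lowerSemicontinuous_Phi p).measurable.comp
    (measurable_pi_lambda _ fun n => hmeas (x n) (y n))

theorem isExtendedSeminorm_phiIntegral_left
    (hmeas : ∀ x y, Measurable fun t => inner ℂ y (𝒜 t x)) (y : ℕ → K) :
    IsExtendedSeminorm ℂ fun x => phiIntegral μ p 𝒜 x y :=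
  .lintegral μ
    (fun t => (isExtendedSeminorm_Phi p).comp
      (LinearMap.pi fun n => innerₛₗ ℂ (y n) ∘ₗ (𝒜 t).toLinearMap ∘ₗ LinearMap.proj n))
    (measurable_Phi_inner p hmeas · y)

theorem isExtendedSeminorm_phiIntegral_right
    (hmeas : ∀ x y, Measurable fun t => inner ℂ y (𝒜 t x)) (x : ℕ → H) :
    IsExtendedSeminorm ℂ (phiIntegral μ p 𝒜 x) := by
  let coeffs (t : Ω) : (ℕ → K) →ₗ⋆[ℂ] (ℕ → ℂ) :=
    { toFun := fun y n => inner ℂ (y n) (𝒜 t (x n))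
      map_add' := fun y z => funext fun n => inner_add_left _ _ _
      map_smul' := fun c y => funext fun n => inner_smul_left _ _ _ }
  exact .lintegral μ (fun t => (isExtendedSeminorm_Phi p).comp (coeffs t))
    (measurable_Phi_inner p hmeas x)

theorem lowerSemicontinuous_phiIntegral
    (hmeas : ∀ x y, Measurable fun t => inner ℂ y (𝒜 t x)) :
    LowerSemicontinuous fun z : (ℕ → H) × (ℕ → K) => phiIntegral μ p 𝒜 z.1 z.2 :=
  lowerSemicontinuous_lintegral μ (fun z => measurable_Phi_inner p hmeas z.1 z.2)
    fun t => (lowerSemicontinuous_Phi p).comp (by fun_prop)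

variable [CompleteSpace H] [CompleteSpace K]

theorem exists_phiIntegral_contraction_le
    (hmeas : ∀ x y, Measurable fun t => inner ℂ y (𝒜 t x))
    {b : ℕ → H} {c : ℕ → K} (hb : Orthonormal ℂ b) (hc : Orthonormal ℂ c)
    (hfin : ∀ e f, Orthonormal ℂ e → Orthonormal ℂ f → phiIntegral μ p 𝒜 e f < ⊤) :
    ∃ C : ℝ≥0, ∀ (S : H →L[ℂ] H) (T : K →L[ℂ] K), ‖S‖ ≤ 1 → ‖T‖ ≤ 1 →
      phiIntegral μ p 𝒜 (fun n => S (b n)) (fun n => T (c n)) ≤ C := by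
  have hlsc := lowerSemicontinuous_phiIntegral μ p hmeas
  refine IsExtendedSeminorm.exists_le_of_lt_top_on_unitary
    (fun T => ?_) (fun S => ?_) (fun T => ?_) (fun S => ?_) fun u hu v hv => ?_
  · exact (isExtendedSeminorm_phiIntegral_left μ p hmeas _).comp
      (LinearMap.pi fun n => (ContinuousLinearMap.apply ℂ H (b n)).toLinearMap)
  · exact (isExtendedSeminorm_phiIntegral_right μ p hmeas _).comp
      (LinearMap.pi fun n => (ContinuousLinearMap.apply ℂ K (c n)).toLinearMap)
  · exact hlsc.comp (g := fun S : H →L[ℂ] H => (fun n => S (b n), fun n => T (c n)))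
      (by fun_prop)
  · exact hlsc.comp (g := fun T : K →L[ℂ] K => (fun n => S (b n), fun n => T (c n)))
      (by fun_prop)
  · exact hfin _ _ (hb.comp_linearIsometryEquiv (Unitary.linearIsometryEquiv ⟨u, hu⟩))
      (hc.comp_linearIsometryEquiv (Unitary.linearIsometryEquiv ⟨v, hv⟩))

theorem exists_phiIntegral_orthonormal_le
    (hmeas : ∀ x y, Measurable fun t => inner ℂ y (𝒜 t x))
    (hfin : ∀ e f, Orthonormal ℂ e → Orthonormal ℂ f → phiIntegral μ p 𝒜 e f < ⊤) :
    ∃ C : ℝ≥0, ∀ e f, Orthonormal ℂ e → Orthonormal ℂ f → phiIntegral μ p 𝒜 e f ≤ C := by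
  by_cases hexists : ∃ (b : ℕ → H) (c : ℕ → K), Orthonormal ℂ b ∧ Orthonormal ℂ c
  · obtain ⟨b, c, hb, hc⟩ := hexists
    obtain ⟨C, hC⟩ := exists_phiIntegral_contraction_le μ p hmeas hb hc hfin
    refine ⟨C, fun e f he hf => ?_⟩
    obtain ⟨S, hS, hSb⟩ := exists_contraction_map_orthonormal hb he
    obtain ⟨T, hT, hTc⟩ := exists_contraction_map_orthonormal hc hf
    simpa only [hSb, hTc] using hC S T hS hT
  · exact ⟨0, fun e f he hf => (hexists ⟨e, f, he, hf⟩).elim⟩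

end PhiIntegral

theorem stmt14_general {H K Ω : Type*} [NormedAddCommGroup H] [InnerProductSpace ℂ H]
    [CompleteSpace H] [NormedAddCommGroup K] [InnerProductSpace ℂ K] [CompleteSpace K]
    [MeasurableSpace Ω] (μ : Measure Ω) (p : Seminorm ℂ (ℕ →₀ ℂ)) (𝒜 : Ω → H →L[ℂ] K)
    (hmeas : ∀ x y, Measurable fun t => inner ℂ y (𝒜 t x))
    (hfin : ∀ (e : ℕ → H) (f : ℕ → K), Orthonormal ℂ e → Orthonormal ℂ f →
      ∫⁻ t, Phi p (fun n => inner ℂ (f n) (𝒜 t (e n))) ∂μ < ⊤) :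
    sSup {r : ℝ≥0∞ | ∃ (e : ℕ → H) (f : ℕ → K), Orthonormal ℂ e ∧ Orthonormal ℂ f ∧
      r = ∫⁻ t, Phi p (fun n => inner ℂ (f n) (𝒜 t (e n))) ∂μ} < ⊤ := by
  obtain ⟨C, hC⟩ := exists_phiIntegral_orthonormal_le μ p hmeas hfin
  refine (sSup_le ?_).trans_lt (ENNReal.coe_lt_top (r := C))
  rintro r ⟨e, f, he, hf, rfl⟩
  exact hC e f he hf

/-- let `φ` be a symmetric norming function and `Φ` its extension.
If `𝒜 : Ω → B(H)` has measurable matrix coefficients, `Φ((⟨𝒜_t e_n, f_n⟩)_n) < ∞`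
for a.e. `t` and all orthonormal sequences, and
`∫_Ω Φ((⟨𝒜_t e_n, f_n⟩)_n) dμ < ∞` for every pair of orthonormal sequences, then
`sup { ∫_Ω Φ((⟨𝒜_t e_n, f_n⟩)_n) dμ : (e_n), (f_n) orthonormal } < ∞`. -/
theorem stmt14 (H : Type*) [NormedAddCommGroup H] [InnerProductSpace ℂ H]
    [CompleteSpace H] [TopologicalSpace.SeparableSpace H]
    (hinf : ¬ FiniteDimensional ℂ H)
    {Ω : Type*} [MeasurableSpace Ω] (μ : Measure Ω)
    (φ : (ℕ →₀ ℂ) → ℝ)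
    (hφ_nonneg : ∀ a, 0 ≤ φ a)
    (hφ_def : ∀ a, φ a = 0 ↔ a = 0)
    (hφ_add : ∀ a b, φ (a + b) ≤ φ a + φ b)
    (hφ_smul : ∀ (c : ℂ) (a), φ (c • a) = ‖c‖ * φ a)
    (hφ_one : φ (Finsupp.single 0 1) = 1)
    (hφ_perm : ∀ (σ : Equiv.Perm ℕ) (a), φ (Finsupp.equivMapDomain σ a) = φ a)
    (hφ_abs : ∀ a, φ (Finsupp.mapRange (fun z : ℂ => (‖z‖ : ℂ)) (by simp) a) = φ a)
    (hφ_mono : ∀ a b : ℕ →₀ ℂ, (∀ n, ‖a n‖ ≤ ‖b n‖) → φ a ≤ φ b)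
    (𝒜 : Ω → (H →L[ℂ] H))
    (hmeas : ∀ x y : H, Measurable (fun t => (inner ℂ y (𝒜 t x) : ℂ)))
    (hae : ∀ᵐ t ∂μ, ∀ e f : ℕ → H, Orthonormal ℂ e → Orthonormal ℂ f →
      Phi φ (fun n => (inner ℂ (f n) (𝒜 t (e n)) : ℂ)) < ⊤)
    (hON : ∀ e f : ℕ → H, Orthonormal ℂ e → Orthonormal ℂ f →
      ∫⁻ t, Phi φ (fun n => (inner ℂ (f n) (𝒜 t (e n)) : ℂ)) ∂μ < ⊤) :
    sSup {r : ℝ≥0∞ | ∃ e f : ℕ → H, Orthonormal ℂ e ∧ Orthonormal ℂ f ∧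
      r = ∫⁻ t, Phi φ (fun n => (inner ℂ (f n) (𝒜 t (e n)) : ℂ)) ∂μ} < ⊤ :=
  stmt14_general μ (Seminorm.of φ hφ_add hφ_smul) 𝒜 hmeas hON
end

section
/- Let K be a compact Hausdorff space, (X, ν) a measure space, 1 ≤ p ≤ q < ∞ with 1 < q, and (Ω, 𝔐, μ) a measure space. Let 𝒜 : Ω → B(C(K,ℝ), L^q(X,ν)) be such that for every f ∈ C(K,ℝ) and every g ∈ L^{q'}(X,ν) the function t ↦ ∫_X (𝒜_t f)·g dν is integrable on Ω, and suppose each 𝒜_t is a positive operator (f ≥ 0 implies 𝒜_t f ≥ 0 ν-a.e.). Then for every S ∈ 𝔐 the Gel'fand integral ∫_S 𝒜 dμ — the unique bounded operator I_S : C(K,ℝ) → L^q(X,ν) with ∫_X (I_S f)·g dν = ∫_S (∫_X (𝒜_t f)·g dν) dμ(t) for all f ∈ C(K,ℝ), g ∈ L^{q'}(X,ν) — exists and is a (q,p)-summing operator. -/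
open MeasureTheory ENNReal

/-- A bounded operator between real Banach spaces is `(q,p)`-summing. -/
def IsSummingQPReal (q p : ℝ) {E F : Type*} [NormedAddCommGroup E] [NormedSpace ℝ E]
    [NormedAddCommGroup F] [NormedSpace ℝ F] (T : E →L[ℝ] F) : Prop :=
  ∃ C : ℝ, 0 ≤ C ∧ ∀ (n : ℕ) (x : Fin n → E),
    (∑ k, ‖T (x k)‖ ^ q) ^ (1 / q) ≤
      C * ⨆ φ : {φ : StrongDual ℝ E // ‖φ‖ ≤ 1},
        (∑ k, ‖(φ : StrongDual ℝ E) (x k)‖ ^ p) ^ (1 / p)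

/-!
For conjugate exponents, `L^p` is the dual of `L^q` over an arbitrary measure: given a functional
`φ` on `L^q`, the energy `f ↦ ‖f‖^q / q - φ f` is modular for the lattice operations, so a
minimizing sequence can be replaced by its `limsup`, and the Euler-Lagrange equation at the
minimizer `f` represents `φ` by `|f|^(q-2) f`. By the closed graph theorem, applied in each
variable, the weak integrals of `𝒜` form a bounded bilinear form, which this duality turns into the
operator `∫ 𝒜 dμ`.

If all `𝒜_t` are positive, so is the integral. For a positive operator `T` on `C(K)`, a pointwise
bound `‖(f_1, …, f_n)‖ ≤ M` on `K`, for any norm, passes to `‖(T f_1, …, T f_n)‖ ≤ M · T 1` almost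
everywhere, since it amounts to linear inequalities, of which countably many suffice. Integrating
the `q`-th powers for the `ℓ^q`-norm shows that `T` is `(q,q)`-summing with constant `‖T 1‖`, hence
`(q,p)`-summing for `p ≤ q`.
-/

section SubmodularMinimization

open Filter Topology Set

variable {α : Type*} [Lattice α] {J : α → ℝ}

lemma submodular_partialSups_le (hJ : ∀ a b, J (a ⊔ b) + J (a ⊓ b) ≤ J a + J b) {s : ℝ}
    (hs : ∀ a, s ≤ J a) {v : ℕ → α} {δ : ℕ → ℝ} (hv : ∀ k, J (v k) ≤ s + δ k) (n : ℕ) :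
    J (partialSups v n) ≤ s + ∑ k ∈ Finset.range (n + 1), δ k := by
  induction n with
  | zero => simpa using hv 0
  | succ n ih =>
    have hsucc : partialSups v (n + 1) = partialSups v n ⊔ v (n + 1) := partialSups_succ v n
    rw [hsucc, Finset.sum_range_succ]
    linarith [hJ (partialSups v n) (v (n + 1)), hs (partialSups v n ⊓ v (n + 1)), hv (n + 1)]

variable [TopologicalSpace α] [OrderClosedTopology α] [Nonempty α]

/- Passing from a minimizing sequence `v` to `limsup v` costs nothing: the excess of
`v n ⊔ ⋯ ⊔ v m` over the infimum is at most the sum of the excesses. -/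
theorem exists_forall_le_of_submodular (hcont : Continuous J) (hbdd : BddBelow (range J))
    (hJ : ∀ a b, J (a ⊔ b) + J (a ⊓ b) ≤ J a + J b)
    (hmono : ∀ u : ℕ → α, Monotone u → BddAbove (range (J ∘ u)) → ∃ a, Tendsto u atTop (𝓝 a))
    (hanti : ∀ u : ℕ → α, Antitone u → BddAbove (range (J ∘ u)) → ∃ a, Tendsto u atTop (𝓝 a)) :
    ∃ a, ∀ b, J a ≤ J b := by
  set s := ⨅ a, J a
  have hs (a : α) : s ≤ J a := ciInf_le hbdd a
  have hmin (n : ℕ) : ∃ a, J a < s + (1 / 2) ^ n :=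
    exists_lt_of_ciInf_lt (lt_add_of_pos_right s (by positivity))
  choose v hv using hmin
  let tailSup (n : ℕ) : ℕ →o α := partialSups fun k ↦ v (n + k)
  have htail (n m : ℕ) : J (tailSup n m) ≤ s + (1 / 2) ^ n * 2 := by
    refine (submodular_partialSups_le hJ hs (fun k ↦ (hv (n + k)).le) m).trans ?_
    simp only [pow_add, ← Finset.mul_sum]
    gcongr
    exact sum_geometric_two_le (m + 1)
  choose w hw using fun n ↦ hmono (tailSup n) (tailSup n).monotone
    ⟨_, forall_mem_range.2 (htail n)⟩
  have hJw (n : ℕ) : J (w n) ≤ s + (1 / 2) ^ n * 2 :=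
    le_of_tendsto' ((hcont.tendsto _).comp (hw n)) (htail n)
  have hw_anti : Antitone w := antitone_nat_of_succ_le fun n ↦ by
    refine le_of_tendsto_of_tendsto' (hw (n + 1)) ((hw n).comp (tendsto_add_atTop_nat 1))
      fun m ↦ partialSups_le _ _ _ fun k hk ↦ ?_
    rw [add_right_comm, add_assoc]
    exact le_partialSups_of_le (fun k ↦ v (n + k)) (Nat.succ_le_succ hk)
  have hw_bdd : BddAbove (range (J ∘ w)) := by
    refine ⟨s + 1 * 2, forall_mem_range.2 fun n ↦ (hJw n).trans ?_⟩
    gcongr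
    exact pow_le_one₀ (by norm_num) (by norm_num)
  obtain ⟨a, ha⟩ := hanti w hw_anti hw_bdd
  have hlim : Tendsto (fun n : ℕ ↦ s + (1 / 2) ^ n * 2) atTop (𝓝 (s + 0 * 2)) :=
    tendsto_const_nhds.add
      ((_root_.tendsto_pow_atTop_nhds_zero_of_lt_one (by norm_num) (by norm_num)).mul_const 2)
  have hJa : J a ≤ s := by
    simpa using le_of_tendsto_of_tendsto' ((hcont.tendsto a).comp ha) hlim hJw
  exact ⟨a, fun b ↦ hJa.trans (hs b)⟩

end SubmodularMinimization

section LpNorm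

open Filter Topology Set

variable {X : Type*} [MeasurableSpace X] {ν : Measure X} {p : ℝ}

lemma integrable_norm_rpow_coeFn {E : Type*} [NormedAddCommGroup E] (hp : 0 < p)
    (f : Lp E (ENNReal.ofReal p) ν) : Integrable (fun x ↦ ‖f x‖ ^ p) ν := by
  simpa [ENNReal.toReal_ofReal hp.le] using
    (Lp.memLp f).integrable_norm_rpow (by simpa using hp) ENNReal.ofReal_ne_top

lemma norm_rpow_eq_integral_norm_rpow {E : Type*} [NormedAddCommGroup E] (hp : 0 < p)
    (f : Lp E (ENNReal.ofReal p) ν) : ‖f‖ ^ p = ∫ x, ‖f x‖ ^ p ∂ν := by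
  have hint : 0 ≤ ∫ x, ‖f x‖ ^ p ∂ν := integral_nonneg fun x ↦ by positivity
  rw [Lp.norm_def, (Lp.memLp f).eLpNorm_eq_integral_rpow_norm (by simpa using hp)
    ENNReal.ofReal_ne_top, ENNReal.toReal_ofReal hp.le,
    ENNReal.toReal_ofReal (by positivity), Real.rpow_inv_rpow hint hp.ne']

lemma norm_sup_rpow_add_norm_inf_rpow (hp : 0 < p) (f g : Lp ℝ (ENNReal.ofReal p) ν) :
    ‖f ⊔ g‖ ^ p + ‖f ⊓ g‖ ^ p = ‖f‖ ^ p + ‖g‖ ^ p := by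
  simp only [norm_rpow_eq_integral_norm_rpow hp]
  rw [← integral_add (integrable_norm_rpow_coeFn hp _) (integrable_norm_rpow_coeFn hp _),
    ← integral_add (integrable_norm_rpow_coeFn hp _) (integrable_norm_rpow_coeFn hp _)]
  refine integral_congr_ae ?_
  filter_upwards [Lp.coeFn_sup f g, Lp.coeFn_inf f g] with x hsup hinf
  rw [hsup, hinf, Pi.sup_apply, Pi.inf_apply]
  rcases le_total (f x) (g x) with h | h <;> simp [h, add_comm]

lemma norm_rpow_add_norm_rpow_le_norm_add_rpow (hp : 1 ≤ p) {f g : Lp ℝ (ENNReal.ofReal p) ν}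
    (hf : 0 ≤ f) (hg : 0 ≤ g) : ‖f‖ ^ p + ‖g‖ ^ p ≤ ‖f + g‖ ^ p := by
  have hp₀ : 0 < p := by linarith
  simp only [norm_rpow_eq_integral_norm_rpow hp₀]
  rw [← integral_add (integrable_norm_rpow_coeFn hp₀ _) (integrable_norm_rpow_coeFn hp₀ _)]
  refine integral_mono_ae ((integrable_norm_rpow_coeFn hp₀ _).add
    (integrable_norm_rpow_coeFn hp₀ _)) (integrable_norm_rpow_coeFn hp₀ _) ?_
  filter_upwards [(Lp.coeFn_nonneg f).2 hf, (Lp.coeFn_nonneg g).2 hg, Lp.coeFn_add f g]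
    with x hfx hgx hadd
  simp only [Pi.zero_apply] at hfx hgx
  rw [hadd, Pi.add_apply, Real.norm_of_nonneg hfx, Real.norm_of_nonneg hgx,
    Real.norm_of_nonneg (add_nonneg hfx hgx)]
  exact Real.add_rpow_le_rpow_add hfx hgx hp

lemma exists_tendsto_of_monotone_of_bddAbove_norm [Fact (1 ≤ ENNReal.ofReal p)]
    {u : ℕ → Lp ℝ (ENNReal.ofReal p) ν} (hu : Monotone u)
    (hbdd : BddAbove (range fun n ↦ ‖u n‖)) : ∃ f, Tendsto u atTop (𝓝 f) := by
  have hp : 1 ≤ p := ENNReal.one_le_ofReal.1 Fact.out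
  have hp₀ : 0 < p := by linarith
  let a (n : ℕ) : ℝ := ‖u n - u 0‖ ^ p
  have hdist {n m : ℕ} (hnm : n ≤ m) : ‖u m - u n‖ ^ p ≤ a m - a n := by
    have := norm_rpow_add_norm_rpow_le_norm_add_rpow hp
      (sub_nonneg.2 (hu (Nat.zero_le n))) (sub_nonneg.2 (hu hnm))
    rw [add_comm (u n - u 0), sub_add_sub_cancel] at this
    linarith
  have ha_mono : Monotone a := fun n m hnm ↦ by
    linarith [hdist hnm, Real.rpow_nonneg (norm_nonneg (u m - u n)) p]
  have ha_bdd : BddAbove (range a) := by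
    obtain ⟨C, hC⟩ := hbdd
    refine ⟨(C + ‖u 0‖) ^ p, forall_mem_range.2 fun n ↦ ?_⟩
    have := (norm_sub_le (u n) (u 0)).trans (add_le_add_left (hC (mem_range_self n)) _)
    exact Real.rpow_le_rpow (norm_nonneg _) this hp₀.le
  have ha_lim : Tendsto (fun n ↦ (⨆ k, a k) - a n) atTop (𝓝 0) := by
    rw [← sub_self (⨆ k, a k)]
    exact tendsto_const_nhds.sub (tendsto_atTop_ciSup ha_mono ha_bdd)
  refine cauchySeq_tendsto_of_complete <|
    cauchySeq_of_le_tendsto_0' (fun n ↦ ((⨆ k, a k) - a n) ^ p⁻¹) (fun n m hnm ↦ ?_) ?_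
  · rw [dist_comm, dist_eq_norm, Real.le_rpow_inv_iff_of_pos (norm_nonneg _)
      (sub_nonneg.2 (le_ciSup ha_bdd n)) hp₀]
    linarith [hdist hnm, le_ciSup ha_bdd m]
  · simpa [Real.zero_rpow (inv_ne_zero hp₀.ne')] using
      ha_lim.rpow_const (p := p⁻¹) (Or.inr (by positivity))

end LpNorm

section EnergyMinimization

open Set

/-- The functional `f ↦ ‖f‖ ^ q / q - φ f`, whose minimizers on `L^q` lead to an integral
representation of the functional `φ`. -/
noncomputable def dualEnergy {E : Type*} [NormedAddCommGroup E] [NormedSpace ℝ E] (q : ℝ)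
    (φ : StrongDual ℝ E) (f : E) : ℝ :=
  ‖f‖ ^ q / q - φ f

lemma norm_le_dualEnergy_add {E : Type*} [NormedAddCommGroup E] [NormedSpace ℝ E] {p q : ℝ}
    (hpq : p.HolderConjugate q) (φ : StrongDual ℝ E) (f : E) :
    ‖f‖ ≤ dualEnergy q φ f + (‖φ‖ + 1) ^ p / p := by
  have hyoung := Real.young_inequality_of_nonneg (norm_nonneg f)
    (add_nonneg (norm_nonneg φ) zero_le_one) hpq.symm
  have hφ : φ f ≤ ‖φ‖ * ‖f‖ := (le_abs_self _).trans (φ.le_opNorm f)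
  rw [dualEnergy]
  linarith

variable {X : Type*} [MeasurableSpace X] {ν : Measure X} {q : ℝ} [Fact (1 ≤ ENNReal.ofReal q)]

lemma dualEnergy_sup_add_dualEnergy_inf (hq : 0 < q)
    (φ : StrongDual ℝ (Lp ℝ (ENNReal.ofReal q) ν)) (f g : Lp ℝ (ENNReal.ofReal q) ν) :
    dualEnergy q φ (f ⊔ g) + dualEnergy q φ (f ⊓ g) = dualEnergy q φ f + dualEnergy q φ g := by
  have hφ : φ (f ⊔ g) + φ (f ⊓ g) = φ f + φ g := by
    rw [← map_add, ← map_add, add_comm (f ⊔ g), inf_add_sup]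
  have hnorm := norm_sup_rpow_add_norm_inf_rpow hq f g
  simp only [dualEnergy]
  linear_combination hnorm / q - hφ

theorem exists_isMinOn_dualEnergy (hq : 1 < q) (φ : StrongDual ℝ (Lp ℝ (ENNReal.ofReal q) ν)) :
    ∃ f, IsMinOn (dualEnergy q φ) univ f := by
  have hq₀ : 0 < q := by linarith
  obtain ⟨C, hC⟩ : ∃ C, ∀ g, ‖g‖ ≤ dualEnergy q φ g + C :=
    ⟨_, norm_le_dualEnergy_add (Real.HolderConjugate.conjExponent hq).symm φ⟩
  have hcont : Continuous (dualEnergy q φ) :=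
    ((continuous_norm.rpow_const fun _ ↦ Or.inr hq₀.le).div_const q).sub φ.continuous
  have hbddBelow : BddBelow (range (dualEnergy q φ)) :=
    ⟨-C, forall_mem_range.2 fun g ↦ by linarith [hC g, norm_nonneg g]⟩
  have hbdd_norm {u : ℕ → Lp ℝ (ENNReal.ofReal q) ν}
      (hu : BddAbove (range (dualEnergy q φ ∘ u))) : BddAbove (range fun n ↦ ‖u n‖) := by
    obtain ⟨D, hD⟩ := hu
    exact ⟨D + C, forall_mem_range.2 fun n ↦
      (hC (u n)).trans (add_le_add_left (hD (mem_range_self n)) C)⟩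
  obtain ⟨f, hf⟩ := exists_forall_le_of_submodular hcont hbddBelow
    (fun f g ↦ (dualEnergy_sup_add_dualEnergy_inf hq₀ φ f g).le)
    (fun u hu h ↦ exists_tendsto_of_monotone_of_bddAbove_norm hu (hbdd_norm h))
    (fun u hu h ↦ by
      obtain ⟨f, hf⟩ := exists_tendsto_of_monotone_of_bddAbove_norm hu.neg
        (by simpa using hbdd_norm h)
      exact ⟨-f, by simpa using hf.neg⟩)
  exact ⟨f, fun g _ ↦ hf g⟩

end EnergyMinimization

section LpDuality

open Set

lemma abs_abs_rpow_sub_two_mul_self {q : ℝ} (hq : 1 < q) (a : ℝ) :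
    |(|a| ^ (q - 2) * a)| = |a| ^ (q - 1) := by
  rcases eq_or_ne a 0 with rfl | ha
  · simp [Real.zero_rpow (sub_pos.2 hq).ne']
  · rw [abs_mul, abs_of_nonneg (by positivity), ← Real.rpow_add_one (abs_ne_zero.2 ha)]
    congr 1
    ring

lemma abs_deriv_abs_add_mul_rpow_le {q : ℝ} (hq : 1 < q) (a b : ℝ) {t : ℝ} (ht : |t| ≤ 1) :
    |q * |a + t * b| ^ (q - 2) * (a + t * b) * b| ≤ q * (|a| + |b|) ^ q := by
  have hab : |a + t * b| ≤ |a| + |b| :=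
    (abs_add_le _ _).trans <| by
      rw [abs_mul]
      gcongr
      exact mul_le_of_le_one_left (abs_nonneg b) ht
  calc |q * |a + t * b| ^ (q - 2) * (a + t * b) * b|
      = q * (|a + t * b| ^ (q - 1) * |b|) := by
        rw [mul_assoc q, abs_mul, abs_mul, abs_abs_rpow_sub_two_mul_self hq,
          abs_of_pos (by linarith), mul_assoc]
    _ ≤ q * ((|a| + |b|) ^ (q - 1) * (|a| + |b|)) := by
        gcongr
        exact le_add_of_nonneg_left (abs_nonneg a)
    _ = q * (|a| + |b|) ^ q := by
        rw [← Real.rpow_add_one' (by positivity) (by linarith), sub_add_cancel]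

lemma hasDerivAt_abs_add_mul_rpow {q : ℝ} (hq : 1 < q) (a b t : ℝ) :
    HasDerivAt (fun t ↦ |a + t * b| ^ q) (q * |a + t * b| ^ (q - 2) * (a + t * b) * b) t := by
  have hlin : HasDerivAt (fun t ↦ a + t * b) b t := by
    simpa using ((hasDerivAt_id t).mul_const b).const_add a
  exact (hasDerivAt_abs_rpow (a + t * b) hq).comp t hlin

variable {X : Type*} [MeasurableSpace X] {ν : Measure X} {p q : ℝ}

lemma hasDerivAt_integral_abs_add_mul_rpow (hq : 1 < q) {f g : X → ℝ}
    (hf : MemLp f (ENNReal.ofReal q) ν) (hg : MemLp g (ENNReal.ofReal q) ν) :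
    HasDerivAt (fun t : ℝ ↦ ∫ x, |f x + t * g x| ^ q ∂ν)
      (∫ x, q * |f x| ^ (q - 2) * f x * g x ∂ν) 0 := by
  have hq₀ : 0 < q := by linarith
  have hf_meas : AEMeasurable f ν := hf.aestronglyMeasurable.aemeasurable
  have hg_meas : AEMeasurable g ν := hg.aestronglyMeasurable.aemeasurable
  have hF_meas (t : ℝ) : AEStronglyMeasurable (fun x ↦ |f x + t * g x| ^ q) ν := by
    have : AEMeasurable (fun x ↦ |f x + t * g x| ^ q) ν := by fun_prop
    exact this.aestronglyMeasurable
  have hF'_meas : AEStronglyMeasurable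
      (fun x ↦ q * |f x + 0 * g x| ^ (q - 2) * (f x + 0 * g x) * g x) ν := by
    have : AEMeasurable
        (fun x ↦ q * |f x + 0 * g x| ^ (q - 2) * (f x + 0 * g x) * g x) ν := by fun_prop
    exact this.aestronglyMeasurable
  have hF_int : Integrable (fun x ↦ |f x + 0 * g x| ^ q) ν := by
    simpa [ENNReal.toReal_ofReal hq₀.le] using
      hf.integrable_norm_rpow (by simpa using hq₀) ENNReal.ofReal_ne_top
  have hbound : Integrable (fun x ↦ q * (|f x| + |g x|) ^ q) ν := by
    have := ((hf.norm.add hg.norm).integrable_norm_rpow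
      (by simpa using hq₀) ENNReal.ofReal_ne_top).const_mul q
    simpa [ENNReal.toReal_ofReal hq₀.le, abs_of_nonneg, add_nonneg] using this
  have hderiv := (hasDerivAt_integral_of_dominated_loc_of_deriv_le
    (F := fun t x ↦ |f x + t * g x| ^ q)
    (F' := fun t x ↦ q * |f x + t * g x| ^ (q - 2) * (f x + t * g x) * g x)
    (Metric.ball_mem_nhds (0 : ℝ) one_pos) (.of_forall hF_meas) hF_int hF'_meas
    (.of_forall fun x t ht ↦ abs_deriv_abs_add_mul_rpow_le hq (f x) (g x)
      (by simpa using (mem_ball_zero_iff.1 ht).le)) hbound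
    (.of_forall fun x t _ ↦ hasDerivAt_abs_add_mul_rpow hq (f x) (g x) t)).2
  simpa only [zero_mul, add_zero] using hderiv

lemma memLp_abs_rpow_sub_two_mul (hpq : p.HolderConjugate q) (f : Lp ℝ (ENNReal.ofReal q) ν) :
    MemLp (fun x ↦ |f x| ^ (q - 2) * f x) (ENNReal.ofReal p) ν := by
  have hq₁ : 0 < q - 1 := hpq.symm.sub_one_pos
  have hexp : ENNReal.ofReal q / ENNReal.ofReal (q - 1) = ENNReal.ofReal p := by
    rw [← ENNReal.ofReal_div_of_pos hq₁, hpq.symm.conjugate_eq]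
  have hpow := (Lp.memLp f).norm_rpow_div (ENNReal.ofReal (q - 1))
  rw [hexp, ENNReal.toReal_ofReal hq₁.le] at hpow
  have hf := (Lp.aestronglyMeasurable f).aemeasurable
  refine hpow.mono ((hf.abs.pow_const _).mul hf).aestronglyMeasurable (.of_forall fun x ↦ ?_)
  rw [Real.norm_eq_abs, abs_abs_rpow_sub_two_mul_self hpq.symm.lt]
  exact le_abs_self _

/-- The power-weighted duality map `f ↦ |f|^(q-2) f` from `L^q(ν)` to `L^p(ν)`, where `p` and `q`
are conjugate exponents. It is the derivative of `f ↦ ‖f‖ ^ q / q`. The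
product vanishes wherever `f` does, also when `q < 2`. -/
noncomputable def dualityMap (hpq : p.HolderConjugate q) (f : Lp ℝ (ENNReal.ofReal q) ν) :
    Lp ℝ (ENNReal.ofReal p) ν :=
  (memLp_abs_rpow_sub_two_mul hpq f).toLp

lemma coeFn_dualityMap (hpq : p.HolderConjugate q) (f : Lp ℝ (ENNReal.ofReal q) ν) :
    dualityMap hpq f =ᵐ[ν] fun x ↦ |f x| ^ (q - 2) * f x :=
  MemLp.coeFn_toLp _

lemma dualityMap_nonneg (hpq : p.HolderConjugate q) {f : Lp ℝ (ENNReal.ofReal q) ν}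
    (hf : 0 ≤ f) : 0 ≤ dualityMap hpq f := by
  rw [← Lp.coeFn_nonneg]
  filter_upwards [coeFn_dualityMap hpq f, (Lp.coeFn_nonneg f).2 hf] with x hx hfx
  rw [hx]
  exact mul_nonneg (by positivity) hfx

variable [Fact (1 ≤ ENNReal.ofReal p)] [Fact (1 ≤ ENNReal.ofReal q)]

/-- The integration pairing of `L^p(ν)` with `L^q(ν)` for conjugate exponents, as a bounded
operator from `L^p(ν)` to the dual of `L^q(ν)`. -/
noncomputable def lpDuality (ν : Measure X) (hpq : p.HolderConjugate q) :
    Lp ℝ (ENNReal.ofReal p) ν →L[ℝ] StrongDual ℝ (Lp ℝ (ENNReal.ofReal q) ν) :=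
  haveI := hpq.ennrealOfReal
  (ContinuousLinearMap.mul ℝ ℝ).lpPairing ν (ENNReal.ofReal p) (ENNReal.ofReal q)

lemma lpDuality_apply (hpq : p.HolderConjugate q) (f : Lp ℝ (ENNReal.ofReal p) ν)
    (g : Lp ℝ (ENNReal.ofReal q) ν) : lpDuality ν hpq f g = ∫ x, f x * g x ∂ν := by
  have := hpq.ennrealOfReal
  simp [lpDuality, ContinuousLinearMap.lpPairing_eq_integral]

lemma lpDuality_nonneg (hpq : p.HolderConjugate q) {f : Lp ℝ (ENNReal.ofReal p) ν}
    {g : Lp ℝ (ENNReal.ofReal q) ν} (hf : 0 ≤ f) (hg : 0 ≤ g) : 0 ≤ lpDuality ν hpq f g := by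
  rw [lpDuality_apply]
  refine integral_nonneg_of_ae ?_
  filter_upwards [(Lp.coeFn_nonneg f).2 hf, (Lp.coeFn_nonneg g).2 hg] with x hfx hgx
  exact mul_nonneg hfx hgx

lemma lpDuality_dualityMap_negPart (hpq : p.HolderConjugate q) (f : Lp ℝ (ENNReal.ofReal p) ν) :
    lpDuality ν hpq f (dualityMap hpq.symm f⁻) = -‖f⁻‖ ^ p := by
  rw [lpDuality_apply, norm_rpow_eq_integral_norm_rpow hpq.pos, ← integral_neg]
  refine integral_congr_ae ?_
  filter_upwards [coeFn_dualityMap hpq.symm f⁻, Lp.coeFn_sup (-f) 0, Lp.coeFn_neg f,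
    Lp.coeFn_zero ℝ (ENNReal.ofReal p) ν] with x hdual hsup hneg hzero
  have hx : f⁻ x = max (-f x) 0 := by
    rw [negPart_def, hsup, Pi.sup_apply, hneg, hzero]
    rfl
  rw [hdual, hx]
  rcases le_or_gt 0 (f x) with h | h
  · simp [h, Real.zero_rpow hpq.ne_zero]
  · have hpow : |f x| ^ p = |f x| ^ (p - 2) * |f x| ^ 2 := by
      rw [← Real.rpow_add_natCast (abs_ne_zero.2 h.ne)]
      norm_num
    rw [max_eq_left (by linarith), Real.norm_eq_abs, abs_neg, hpow, sq_abs]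
    ring

lemma nonneg_of_forall_lpDuality_nonneg (hpq : p.HolderConjugate q)
    {f : Lp ℝ (ENNReal.ofReal p) ν} (h : ∀ g, 0 ≤ g → 0 ≤ lpDuality ν hpq f g) : 0 ≤ f := by
  have hdual := h _ (dualityMap_nonneg hpq.symm (negPart_nonneg f))
  rw [lpDuality_dualityMap_negPart, neg_nonneg] at hdual
  rw [← negPart_eq_zero, ← norm_eq_zero]
  exact ((Real.rpow_eq_zero_iff_of_nonneg (norm_nonneg _)).1
    (hdual.antisymm (by positivity))).1

lemma lpDuality_injective (hpq : p.HolderConjugate q) :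
    Function.Injective (lpDuality (X := X) ν hpq) := by
  have hle {f f' : Lp ℝ (ENNReal.ofReal p) ν} (h : lpDuality ν hpq f = lpDuality ν hpq f') :
      f ≤ f' :=
    sub_nonneg.1 <| nonneg_of_forall_lpDuality_nonneg hpq fun g _ ↦ by simp [h]
  exact fun f f' h ↦ (hle h).antisymm (hle h.symm)

lemma hasDerivAt_norm_add_smul_rpow (hpq : p.HolderConjugate q)
    (f g : Lp ℝ (ENNReal.ofReal q) ν) :
    HasDerivAt (fun t : ℝ ↦ ‖f + t • g‖ ^ q) (q * lpDuality ν hpq (dualityMap hpq f) g) 0 := by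
  have hnorm (t : ℝ) : ‖f + t • g‖ ^ q = ∫ x, |f x + t * g x| ^ q ∂ν := by
    rw [norm_rpow_eq_integral_norm_rpow hpq.symm.pos]
    refine integral_congr_ae ?_
    filter_upwards [Lp.coeFn_add f (t • g), Lp.coeFn_smul t g] with x hadd hsmul
    rw [hadd, Pi.add_apply, hsmul, Pi.smul_apply, smul_eq_mul, Real.norm_eq_abs]
  have hdual : q * lpDuality ν hpq (dualityMap hpq f) g =
      ∫ x, q * |f x| ^ (q - 2) * f x * g x ∂ν := by
    rw [lpDuality_apply, ← integral_const_mul]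
    refine integral_congr_ae ?_
    filter_upwards [coeFn_dualityMap hpq f] with x hx
    rw [hx]
    ring
  simp only [hnorm, hdual]
  exact hasDerivAt_integral_abs_add_mul_rpow hpq.symm.lt (Lp.memLp f) (Lp.memLp g)

lemma lpDuality_dualityMap_of_isMinOn_dualEnergy (hpq : p.HolderConjugate q)
    {φ : StrongDual ℝ (Lp ℝ (ENNReal.ofReal q) ν)} {f : Lp ℝ (ENNReal.ofReal q) ν}
    (hf : IsMinOn (dualEnergy q φ) univ f) :
    lpDuality ν hpq (dualityMap hpq f) = φ := by
  ext g
  have hφ : HasDerivAt (fun t : ℝ ↦ φ (f + t • g)) (φ g) 0 := by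
    simpa using ((hasDerivAt_id (0 : ℝ)).mul_const (φ g)).const_add (φ f)
  have hderiv := ((hasDerivAt_norm_add_smul_rpow hpq f g).div_const q).sub hφ
  have hmin : IsLocalMin (fun t : ℝ ↦ dualEnergy q φ (f + t • g)) 0 :=
    .of_forall fun t ↦ by simpa using hf (mem_univ (f + t • g))
  have hzero := hmin.hasDerivAt_eq_zero hderiv
  rwa [mul_div_cancel_left₀ _ hpq.symm.ne_zero, sub_eq_zero] at hzero

theorem lpDuality_surjective (hpq : p.HolderConjugate q) :
    Function.Surjective (lpDuality (X := X) ν hpq) := fun φ ↦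
  let ⟨f, hf⟩ := exists_isMinOn_dualEnergy hpq.symm.lt φ
  ⟨dualityMap hpq f, lpDuality_dualityMap_of_isMinOn_dualEnergy hpq hf⟩

/-- The Riesz representation `L^p(ν) ≃ L^q(ν)*` for conjugate exponents `1 < p, q < ∞` and an
arbitrary measure, as an isomorphism of Banach spaces. -/
noncomputable def lpDualEquiv (ν : Measure X) (hpq : p.HolderConjugate q) :
    Lp ℝ (ENNReal.ofReal p) ν ≃L[ℝ] StrongDual ℝ (Lp ℝ (ENNReal.ofReal q) ν) :=
  .ofBijective (lpDuality ν hpq) (LinearMap.ker_eq_bot.2 (lpDuality_injective hpq))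
    (LinearMap.range_eq_top.2 (lpDuality_surjective hpq))

lemma lpDuality_lpDualEquiv_symm (hpq : p.HolderConjugate q)
    (φ : StrongDual ℝ (Lp ℝ (ENNReal.ofReal q) ν)) :
    lpDuality ν hpq ((lpDualEquiv ν hpq).symm φ) = φ :=
  (lpDualEquiv ν hpq).apply_symm_apply φ

end LpDuality

section GelfandIntegral

open Filter Topology

variable {Ω : Type*} [MeasurableSpace Ω] {μ : Measure Ω} {E F G : Type*}
  [NormedAddCommGroup E] [NormedSpace ℝ E] [CompleteSpace E]
  [NormedAddCommGroup F] [NormedSpace ℝ F] [CompleteSpace F]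
  [NormedAddCommGroup G] [NormedSpace ℝ G] [CompleteSpace G]

lemma exists_clm_forall_apply_eq_integral {A : Ω → F →L[ℝ] G}
    (hA : ∀ y, Integrable (fun t ↦ A t y) μ) :
    ∃ B : F →L[ℝ] G, ∀ y, B y = ∫ t, A t y ∂μ := by
  let L : F →ₗ[ℝ] Ω →₁[μ] G :=
    { toFun y := (hA y).toL1
      map_add' y z := by
        simp only [map_add]
        exact Integrable.toL1_add _ _ (hA y) (hA z)
      map_smul' c y := by
        simp only [map_smul]
        exact Integrable.toL1_smul _ (hA y) c }
  have hL : Continuous L := by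
    refine L.continuous_of_seq_closed_graph fun u y h hu hLu ↦ ?_
    obtain ⟨n, hn, hae⟩ := (tendstoInMeasure_of_tendsto_Lp hLu).exists_seq_tendsto_ae
    have hcoe : ∀ᵐ t ∂μ, ∀ k, L (u k) t = A t (u k) :=
      ae_all_iff.2 fun k ↦ (hA (u k)).coeFn_toL1
    ext1
    filter_upwards [hae, hcoe, (hA y).coeFn_toL1] with t hlim hu_t hy_t
    refine (tendsto_nhds_unique hlim ?_).trans hy_t.symm
    simp only [Function.comp_apply, hu_t]
    exact (((A t).continuous.tendsto y).comp hu).comp hn.tendsto_atTop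
  refine ⟨L1.integralCLM ∘L ⟨L, hL⟩, fun y ↦ ?_⟩
  rw [← integral_congr_ae (hA y).coeFn_toL1, ← L1.integral_eq_integral, L1.integral_eq]
  rfl

theorem exists_clm₂_forall_apply_eq_integral {A : Ω → E →L[ℝ] F →L[ℝ] G}
    (hA : ∀ x y, Integrable (fun t ↦ A t x y) μ) :
    ∃ B : E →L[ℝ] F →L[ℝ] G, ∀ x y, B x y = ∫ t, A t x y ∂μ := by
  choose B hB using fun x ↦ exists_clm_forall_apply_eq_integral (hA x)
  let L : E →ₗ[ℝ] F →L[ℝ] G :=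
    { toFun := B
      map_add' x z := by
        ext y
        simp only [hB, map_add, add_apply]
        exact integral_add (hA x y) (hA z y)
      map_smul' c x := by
        ext y
        simp only [hB, map_smul, smul_apply, RingHom.id_apply]
        exact integral_smul c _ }
  have hL : Continuous L := by
    refine L.continuous_of_seq_closed_graph fun u x ψ hu hLu ↦ ?_
    ext y
    obtain ⟨C, hC⟩ := exists_clm_forall_apply_eq_integral (A := fun t ↦ (A t).flip y)
      fun x ↦ hA x y
    have hLC (z : E) : L z y = C z := (hB z y).trans (hC z).symm
    have hlim : Tendsto (fun n ↦ L (u n) y) atTop (𝓝 (ψ y)) :=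
      ((ContinuousLinearMap.apply ℝ G y).continuous.tendsto ψ).comp hLu
    simp only [hLC] at hlim ⊢
    exact tendsto_nhds_unique hlim ((C.continuous.tendsto x).comp hu)
  exact ⟨⟨L, hL⟩, hB⟩

theorem existsUnique_gelfandIntegral {X : Type*} [MeasurableSpace X] {ν : Measure X} {p q : ℝ}
    [Fact (1 ≤ ENNReal.ofReal p)] [Fact (1 ≤ ENNReal.ofReal q)] (hpq : p.HolderConjugate q)
    {A : Ω → E →L[ℝ] Lp ℝ (ENNReal.ofReal p) ν}
    (hA : ∀ x g, Integrable (fun t ↦ lpDuality ν hpq (A t x) g) μ) :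
    ∃! I : E →L[ℝ] Lp ℝ (ENNReal.ofReal p) ν,
      ∀ x g, lpDuality ν hpq (I x) g = ∫ t, lpDuality ν hpq (A t x) g ∂μ := by
  obtain ⟨B, hB⟩ := exists_clm₂_forall_apply_eq_integral (A := fun t ↦ lpDuality ν hpq ∘L A t) hA
  have hdual (x : E) : lpDuality ν hpq (((lpDualEquiv ν hpq).symm ∘L B) x) = B x :=
    lpDuality_lpDualEquiv_symm hpq (B x)
  refine ⟨(lpDualEquiv ν hpq).symm ∘L B, fun x g ↦ ?_, fun I hI ↦ ?_⟩
  · rw [hdual]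
    exact hB x g
  · ext1 x
    refine lpDuality_injective hpq ?_
    rw [hdual]
    ext g
    exact (hI x g).trans (hB x g).symm

end GelfandIntegral

section PositiveOperator

open TopologicalSpace

variable {K X : Type*} [TopologicalSpace K] [MeasurableSpace X] {ν : Measure X}

lemma ae_sum_mul_coeFn_le_of_positive {r : ℝ≥0∞} {T : C(K, ℝ) →ₗ[ℝ] Lp ℝ r ν}
    (hT : ∀ f, 0 ≤ f → 0 ≤ T f) {ι : Type*} [Fintype ι] (f : ι → C(K, ℝ)) (a : ι → ℝ) {c : ℝ}
    (hf : ∀ t, ∑ k, a k * f k t ≤ c) : ∀ᵐ x ∂ν, ∑ k, a k * T (f k) x ≤ c * T 1 x := by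
  have hle : ∑ k, a k • T (f k) ≤ c • T 1 := by
    have hnonneg : 0 ≤ c • (1 : C(K, ℝ)) - ∑ k, a k • f k := fun t ↦ by
      simpa [ContinuousMap.sum_apply] using hf t
    simpa [sub_nonneg] using hT _ hnonneg
  filter_upwards [(Lp.coeFn_le _ _).2 hle, Lp.coeFn_finsetSum Finset.univ fun k ↦ a k • T (f k),
    ae_all_iff.2 fun k ↦ Lp.coeFn_smul (a k) (T (f k)), Lp.coeFn_smul c (T 1)]
    with x hx hsum hsmul hc
  simp only [hsum, hc, Finset.sum_apply, Pi.smul_apply, hsmul, smul_eq_mul] at hx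
  exact hx

/- The inequality is tested against a countable dense set of functionals, so that only countably
many null sets are involved. -/
lemma ae_norm_sum_smul_le_of_positive {r : ℝ≥0∞} {T : C(K, ℝ) →ₗ[ℝ] Lp ℝ r ν}
    (hT : ∀ f, 0 ≤ f → 0 ≤ T f) {E : Type*} [NormedAddCommGroup E] [NormedSpace ℝ E]
    [SeparableSpace (StrongDual ℝ E)] {ι : Type*} [Fintype ι]
    (f : ι → C(K, ℝ)) (v : ι → E) {M : ℝ} (hM : 0 ≤ M) (hf : ∀ t, ‖∑ k, f k t • v k‖ ≤ M) :
    ∀ᵐ x ∂ν, ‖∑ k, T (f k) x • v k‖ ≤ M * T 1 x := by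
  have hdense : ∀ᵐ x ∂ν, ∀ n, denseSeq (StrongDual ℝ E) n (∑ k, T (f k) x • v k) ≤
      M * T 1 x * ‖denseSeq (StrongDual ℝ E) n‖ := by
    refine ae_all_iff.2 fun n ↦ ?_
    set ψ := denseSeq (StrongDual ℝ E) n
    have hψ (t : K) : ∑ k, ψ (v k) * f k t ≤ ‖ψ‖ * M := by
      have := (le_abs_self _).trans (ψ.le_opNorm_of_le (hf t))
      simpa [mul_comm] using this
    filter_upwards [ae_sum_mul_coeFn_le_of_positive hT f (fun k ↦ ψ (v k)) hψ] with x hx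
    simpa [mul_comm, mul_left_comm, mul_assoc] using hx
  filter_upwards [hdense, (Lp.coeFn_nonneg _).2 (hT 1 zero_le_one)] with x hx hone
  have hall (ψ : StrongDual ℝ E) : ψ (∑ k, T (f k) x • v k) ≤ M * T 1 x * ‖ψ‖ := by
    refine (denseRange_denseSeq _).induction_on ψ (isClosed_le ?_ ?_) hx
    · exact (ContinuousLinearMap.apply ℝ ℝ _).continuous
    · fun_prop
  refine NormedSpace.norm_le_dual_bound ℝ _ (mul_nonneg hM hone) fun ψ ↦ abs_le'.2 ⟨hall ψ, ?_⟩
  simpa using hall (-ψ)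

end PositiveOperator

section Summing

open Set

lemma sum_rpow_rpow_one_div_anti {ι : Type*} [Fintype ι] {p q : ℝ} (hp : 0 < p) (hpq : p ≤ q)
    {a : ι → ℝ} (ha : ∀ k, 0 ≤ a k) : (∑ k, a k ^ q) ^ (1 / q) ≤ (∑ k, a k ^ p) ^ (1 / p) := by
  have hsum : 0 ≤ ∑ k, a k ^ p := Finset.sum_nonneg fun k _ ↦ Real.rpow_nonneg (ha k) p
  set S := (∑ k, a k ^ p) ^ (1 / p) with hS
  have hS₀ : 0 ≤ S := Real.rpow_nonneg hsum _
  have hSp : ∑ k, a k ^ p = S ^ p := by rw [hS, one_div, Real.rpow_inv_rpow hsum hp.ne']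
  have haS (k : ι) : a k ≤ S := by
    rw [← Real.rpow_le_rpow_iff (ha k) hS₀ hp, ← hSp]
    exact Finset.single_le_sum (f := fun k ↦ a k ^ p) (fun k _ ↦ Real.rpow_nonneg (ha k) p)
      (Finset.mem_univ k)
  have hsplit {x : ℝ} (hx : 0 ≤ x) : x ^ q = x ^ p * x ^ (q - p) := by
    rw [← Real.rpow_add_of_nonneg hx hp.le (sub_nonneg.2 hpq), add_sub_cancel]
  rw [one_div, Real.rpow_inv_le_iff_of_pos
    (Finset.sum_nonneg fun k _ ↦ Real.rpow_nonneg (ha k) q) hS₀ (hp.trans_le hpq)]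
  calc ∑ k, a k ^ q = ∑ k, a k ^ p * a k ^ (q - p) := by simp only [hsplit (ha _)]
    _ ≤ ∑ k, a k ^ p * S ^ (q - p) := by
        gcongr with k
        · exact Real.rpow_nonneg (ha k) p
        · exact ha k
        · exact haS k
    _ = S ^ q := by rw [← Finset.sum_mul, hSp, ← hsplit hS₀]

variable {E F : Type*} [NormedAddCommGroup E] [NormedSpace ℝ E] [NormedAddCommGroup F]
  [NormedSpace ℝ F] {ι : Type*} [Fintype ι] {p q : ℝ}

/-- The weak `ℓ^p`-norm of a finite family of vectors, i.e. the supremum on the right-hand side of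
the definition of a summing operator. -/
noncomputable def weakLpNorm (p : ℝ) (x : ι → E) : ℝ :=
  ⨆ φ : {φ : StrongDual ℝ E // ‖φ‖ ≤ 1}, (∑ k, ‖(φ : StrongDual ℝ E) (x k)‖ ^ p) ^ (1 / p)

lemma weakLpNorm_nonneg (p : ℝ) (x : ι → E) : 0 ≤ weakLpNorm p x :=
  Real.iSup_nonneg fun _ ↦ by positivity

lemma sum_rpow_rpow_one_div_le_weakLpNorm (hp : 0 < p) (x : ι → E) {φ : StrongDual ℝ E}
    (hφ : ‖φ‖ ≤ 1) : (∑ k, ‖φ (x k)‖ ^ p) ^ (1 / p) ≤ weakLpNorm p x := by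
  have hbdd : BddAbove (range fun φ : {φ : StrongDual ℝ E // ‖φ‖ ≤ 1} ↦
      (∑ k, ‖(φ : StrongDual ℝ E) (x k)‖ ^ p) ^ (1 / p)) := by
    refine ⟨(∑ k, ‖x k‖ ^ p) ^ (1 / p), forall_mem_range.2 fun φ ↦ ?_⟩
    gcongr with k
    simpa using φ.1.le_of_opNorm_le φ.2 (x k)
  exact le_ciSup hbdd ⟨φ, hφ⟩

lemma weakLpNorm_anti (hp : 0 < p) (hpq : p ≤ q) (x : ι → E) :
    weakLpNorm q x ≤ weakLpNorm p x :=
  Real.iSup_le (fun φ ↦ (sum_rpow_rpow_one_div_anti hp hpq fun _ ↦ norm_nonneg _).trans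
    (sum_rpow_rpow_one_div_le_weakLpNorm hp x φ.2)) (weakLpNorm_nonneg p x)

lemma IsSummingQPReal.of_le {r : ℝ} (hp : 0 < p) (hpq : p ≤ q) {T : E →L[ℝ] F}
    (hT : IsSummingQPReal r q T) : IsSummingQPReal r p T := by
  obtain ⟨C, hC, hbound⟩ := hT
  exact ⟨C, hC, fun n x ↦ (hbound n x).trans
    (mul_le_mul_of_nonneg_left (weakLpNorm_anti hp hpq x) hC)⟩

variable {K X : Type*} [TopologicalSpace K] [CompactSpace K] [MeasurableSpace X]
  {ν : Measure X}

lemma sum_abs_apply_rpow_le_weakLpNorm (hq : 0 < q) (f : ι → C(K, ℝ)) (t : K) :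
    (∑ k, |f k t| ^ q) ^ (1 / q) ≤ weakLpNorm q f := by
  obtain ⟨δ, hδ⟩ : ∃ δ : StrongDual ℝ C(K, ℝ), ∀ g, δ g = g t :=
    ⟨ContinuousMap.evalCLM ℝ t, fun _ ↦ rfl⟩
  have hδ_norm : ‖δ‖ ≤ 1 := δ.opNorm_le_bound zero_le_one fun g ↦ by
    simpa [hδ] using g.norm_coe_le_norm t
  simpa [hδ] using sum_rpow_rpow_one_div_le_weakLpNorm hq f hδ_norm

lemma ae_sum_abs_coeFn_rpow_le_of_positive (hq : 1 ≤ q) {r : ℝ≥0∞}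
    {T : C(K, ℝ) →ₗ[ℝ] Lp ℝ r ν} (hT : ∀ f, 0 ≤ f → 0 ≤ T f) (f : ι → C(K, ℝ)) :
    ∀ᵐ x ∂ν, (∑ k, |T (f k) x| ^ q) ^ (1 / q) ≤ weakLpNorm q f * T 1 x := by
  have hq₀ : 0 < q := by linarith
  have : Fact (1 ≤ ENNReal.ofReal q) := ⟨by simpa using hq⟩
  classical
  let v (k : ι) : PiLp (ENNReal.ofReal q) fun _ : ι ↦ ℝ := WithLp.toLp _ (Pi.single k 1)
  have hnorm (a : ι → ℝ) : ‖∑ k, a k • v k‖ = (∑ k, |a k| ^ q) ^ (1 / q) := by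
    rw [PiLp.norm_eq_sum (by simp [hq₀.le, hq₀]), ENNReal.toReal_ofReal hq₀.le]
    simp [v, Pi.single_apply]
  simpa only [hnorm] using ae_norm_sum_smul_le_of_positive hT f v (weakLpNorm_nonneg q f)
    fun t ↦ (hnorm fun k ↦ f k t).trans_le (sum_abs_apply_rpow_le_weakLpNorm hq₀ f t)

theorem isSummingQPReal_of_positive [Fact (1 ≤ ENNReal.ofReal q)]
    {T : C(K, ℝ) →L[ℝ] Lp ℝ (ENNReal.ofReal q) ν} (hT : ∀ f, 0 ≤ f → 0 ≤ T f) :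
    IsSummingQPReal q q T := by
  have hq : 1 ≤ q := ENNReal.one_le_ofReal.1 Fact.out
  have hq₀ : 0 < q := by linarith
  refine ⟨‖T 1‖, norm_nonneg _, fun n f ↦ ?_⟩
  change _ ≤ ‖T 1‖ * weakLpNorm q f
  have hM := weakLpNorm_nonneg q f
  rw [one_div, Real.rpow_inv_le_iff_of_pos (by positivity) (by positivity) hq₀]
  calc ∑ k, ‖T (f k)‖ ^ q = ∫ x, ∑ k, ‖T (f k) x‖ ^ q ∂ν := by
        rw [integral_finsetSum _ fun k _ ↦ integrable_norm_rpow_coeFn hq₀ (T (f k))]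
        simp only [norm_rpow_eq_integral_norm_rpow hq₀]
    _ ≤ ∫ x, weakLpNorm q f ^ q * ‖T 1 x‖ ^ q ∂ν := by
        refine integral_mono_ae
          (integrable_finsetSum _ fun k _ ↦ integrable_norm_rpow_coeFn hq₀ (T (f k)))
          ((integrable_norm_rpow_coeFn hq₀ (T 1)).const_mul _) ?_
        filter_upwards [ae_sum_abs_coeFn_rpow_le_of_positive hq (T := T.toLinearMap) hT f,
          (Lp.coeFn_nonneg _).2 (hT 1 zero_le_one)] with x hx hone
        rw [Real.norm_of_nonneg hone, ← Real.mul_rpow hM hone]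
        exact (Real.rpow_inv_le_iff_of_pos (by positivity) (mul_nonneg hM hone) hq₀).1
          (by rwa [← one_div])
    _ = (‖T 1‖ * weakLpNorm q f) ^ q := by
        rw [integral_const_mul, ← norm_rpow_eq_integral_norm_rpow hq₀, mul_comm,
          Real.mul_rpow (norm_nonneg _) hM]

end Summing

theorem stmt15_general (K : Type*) [TopologicalSpace K] [CompactSpace K]
    (X : Type*) [MeasurableSpace X] (ν : Measure X)
    (p q q' : ℝ) (hp : 0 < p) (hpq : p ≤ q) (hq : 1 < q) (hq' : 1 / q + 1 / q' = 1)
    [Fact (1 ≤ ENNReal.ofReal q)] [Fact (1 ≤ ENNReal.ofReal q')]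
    {Ω : Type*} [MeasurableSpace Ω] (μ : Measure Ω)
    (𝒜 : Ω → (C(K, ℝ) →L[ℝ] Lp ℝ (ENNReal.ofReal q) ν))
    (hint : ∀ (f : C(K, ℝ)) (g : Lp ℝ (ENNReal.ofReal q') ν),
      Integrable (fun t ↦ ∫ x, 𝒜 t f x * g x ∂ν) μ) :
    (∃! I : C(K, ℝ) →L[ℝ] Lp ℝ (ENNReal.ofReal q) ν,
      ∀ (f : C(K, ℝ)) (g : Lp ℝ (ENNReal.ofReal q') ν),
        ∫ x, I f x * g x ∂ν = ∫ t, ∫ x, 𝒜 t f x * g x ∂ν ∂μ) ∧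
    ((∀ f : C(K, ℝ), 0 ≤ f → ∀ᵐ t ∂μ, ∀ᵐ x ∂ν, 0 ≤ 𝒜 t f x) →
      ∀ I : C(K, ℝ) →L[ℝ] Lp ℝ (ENNReal.ofReal q) ν,
        (∀ (f : C(K, ℝ)) (g : Lp ℝ (ENNReal.ofReal q') ν),
          ∫ x, I f x * g x ∂ν = ∫ t, ∫ x, 𝒜 t f x * g x ∂ν ∂μ) →
        IsSummingQPReal q p I) := by
  have hqq' : q.HolderConjugate q' := Real.holderConjugate_iff.2 ⟨hq, by simpa using hq'⟩
  simp only [← lpDuality_apply hqq'] at hint ⊢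
  refine ⟨existsUnique_gelfandIntegral hqq' hint, fun hpos I hI ↦ ?_⟩
  have hI_pos (f : C(K, ℝ)) (hf : 0 ≤ f) : 0 ≤ I f := by
    refine nonneg_of_forall_lpDuality_nonneg hqq' fun g hg ↦ ?_
    rw [hI]
    refine integral_nonneg_of_ae ?_
    filter_upwards [hpos f hf] with t ht
    exact lpDuality_nonneg hqq' ((Lp.coeFn_nonneg _).1 ht) hg
  exact (isSummingQPReal_of_positive hI_pos).of_le hp hpq

/-- if `𝒜 : Ω → B(C(K,ℝ), L^q(X,ν))` is weakly* integrable (against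
all `g ∈ L^{q'}`) and each `𝒜_t` is a positive operator, then for every measurable
`S` the Gel'fand integral `∫_S 𝒜 dμ` exists (as the unique bounded operator with the
defining pairing property) and is `(q,p)`-summing. -/
theorem stmt15 (K : Type*) [TopologicalSpace K] [CompactSpace K] [T2Space K]
    (X : Type*) [MeasurableSpace X] (ν : Measure X)
    (p q q' : ℝ) (hp : 1 ≤ p) (hpq : p ≤ q) (hq : 1 < q) (hq' : 1 / q + 1 / q' = 1)
    [Fact (1 ≤ ENNReal.ofReal q)] [Fact (1 ≤ ENNReal.ofReal q')]
    {Ω : Type*} [MeasurableSpace Ω] (μ : Measure Ω)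
    (𝒜 : Ω → (C(K, ℝ) →L[ℝ] Lp ℝ (ENNReal.ofReal q) ν))
    (hint : ∀ (f : C(K, ℝ)) (g : Lp ℝ (ENNReal.ofReal q') ν),
      Integrable (fun t => ∫ x, (𝒜 t f : X → ℝ) x * (g : X → ℝ) x ∂ν) μ)
    (hpos : ∀ t : Ω, ∀ f : C(K, ℝ), 0 ≤ f → ∀ᵐ x ∂ν, 0 ≤ (𝒜 t f : X → ℝ) x) :
    ∀ S : Set Ω, MeasurableSet S →
      (∃! I : C(K, ℝ) →L[ℝ] Lp ℝ (ENNReal.ofReal q) ν,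
        ∀ (f : C(K, ℝ)) (g : Lp ℝ (ENNReal.ofReal q') ν),
          ∫ x, (I f : X → ℝ) x * (g : X → ℝ) x ∂ν =
            ∫ t in S, (∫ x, (𝒜 t f : X → ℝ) x * (g : X → ℝ) x ∂ν) ∂μ) ∧
      ∀ I : C(K, ℝ) →L[ℝ] Lp ℝ (ENNReal.ofReal q) ν,
        (∀ (f : C(K, ℝ)) (g : Lp ℝ (ENNReal.ofReal q') ν),
          ∫ x, (I f : X → ℝ) x * (g : X → ℝ) x ∂ν =
            ∫ t in S, (∫ x, (𝒜 t f : X → ℝ) x * (g : X → ℝ) x ∂ν) ∂μ) →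
        IsSummingQPReal q p I := fun S _ ↦
  let ⟨hI, hsum⟩ := stmt15_general K X ν p q q' (by linarith) hpq hq hq' (μ.restrict S) 𝒜
    fun f g ↦ (hint f g).restrict
  ⟨hI, hsum fun f hf ↦ .of_forall fun t ↦ hpos t f hf⟩
end
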